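/- arXiv:math/0609339 — 3 statements merged into one kernel-verified Lean document; each statement's English description precedes it below -/
import Mathlib

section
/- Let T and U be caterpillars, each with n vertices, such that in each of T and U every spine vertex is adjacent to at least one leaf, and no two distinct spine vertices are adjacent to the same number of leaves (the leaf numbers are strictly positive and pairwise distinct). If N_λ(T) = N_λ(U) for every partition λ of n (equivalently, X_T = X_U), then T and U are isomorphic as graphs. -/
open SimpleGraph Finset

variable {V : Type*} {W : Type*}

open Classical in
/-- `edgeSetType A` : the "type" of the edge set `A`, i.e. the partition (as a multiset of
positive integers) of `#V` whose parts are the orders of the connected components of the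
spanning subgraph `(V, A)`. -/
noncomputable def edgeSetType [Fintype V] (A : Finset (Sym2 V)) : Multiset ℕ :=
  ((Finset.univ : Finset V).image
    (fun v => (SimpleGraph.fromEdgeSet (↑A : Set (Sym2 V))).connectedComponentMk v)).val.map
    (fun c => c.supp.ncard)

open Classical in
/-- `cCoeff G λ = Σ_{A ⊆ E(G), type(A) = λ} (−1)^{#A}`, the coefficient of the power-sum
symmetric function `p_λ` in the chromatic symmetric function `X_G`. -/
noncomputable def cCoeff [Fintype V] (G : SimpleGraph V) (lam : Multiset ℕ) : ℤ :=
  ∑ A ∈ (Finset.univ : Finset (Sym2 V)).powerset,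
    if (↑A : Set (Sym2 V)) ⊆ G.edgeSet ∧ edgeSetType A = lam then (-1 : ℤ) ^ A.card else 0

open Classical in
/-- `NCoeff G λ` : the number of edge sets `A ⊆ E(G)` with `type(A) = λ`. -/
noncomputable def NCoeff [Fintype V] (G : SimpleGraph V) (lam : Multiset ℕ) : ℕ :=
  ((Finset.univ : Finset (Sym2 V)).powerset.filter
    (fun (A : Finset (Sym2 V)) => (↑A : Set (Sym2 V)) ⊆ G.edgeSet ∧ edgeSetType A = lam)).card

/-- A caterpillar is a tree in which the induced subgraph on the set of non-leaf vertices
(vertices of degree at least 2) is a nontrivial path, i.e. (being an induced subgraph of a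
tree, hence acyclic) it has at least two vertices, is connected, and all its vertices have at
most two neighbours in it.  This path is called the spine. -/
def IsCaterpillar [Fintype V] (T : SimpleGraph V) [DecidableRel T.Adj] : Prop :=
  T.IsTree ∧ 2 ≤ {v : V | 2 ≤ T.degree v}.ncard ∧
    (T.induce {v : V | 2 ≤ T.degree v}).Connected ∧
    ∀ w : {v : V | 2 ≤ T.degree v},
      ((T.induce {v : V | 2 ≤ T.degree v}).neighborSet w).ncard ≤ 2

/-- `leafNum T v` : the leaf number of a vertex `v`, i.e. the number of leaves of `T`
adjacent to `v`. -/
noncomputable def leafNum [Fintype V] (T : SimpleGraph V) [DecidableRel T.Adj] (v : V) : ℕ :=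
  {u : V | T.Adj v u ∧ T.degree u = 1}.ncard

/-! The type of an edge set `A` has no part `1` exactly when `A` isolates no vertex, which
forces `A` to contain every edge at a leaf. Hence the set `L` of leaf edges is characterised by
its type: among the edge sets without a part `1` it has the most components, and its parts are
the numbers `leafNum v + 1`, one for each non-leaf vertex `v`. The edge sets without a part `1`
and with one component fewer are the sets `L ∪ {vw}` with `v` and `w` adjacent non-leaf
vertices. In the type of `L ∪ {vw}` the parts `leafNum v + 1` and `leafNum w + 1` of `L` are
replaced by their sum, and two distinct positive integers can be read off from such a
replacement. So the coefficients determine the leaf numbers and which of them belong to adjacent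
vertices; as leaf numbers identify non-leaf vertices, this is the graph up to isomorphism. -/

section EdgeSetType

/-- The spanning subgraph `(V, A)` with edge set `A`. -/
abbrev spanningGraph (A : Finset (Sym2 V)) : SimpleGraph V :=
  fromEdgeSet (A : Set (Sym2 V))

/-- The order of the connected component of `x` in the spanning subgraph `(V, A)`. -/
noncomputable def componentOrder (A : Finset (Sym2 V)) (x : V) : ℕ :=
  ((spanningGraph A).connectedComponentMk x).supp.ncard

open Classical in
/-- The component of `z` in `(V, A)` after the component of `y` has been absorbed into that of `x`:
its fibres are the components of `(V, A ∪ {xy})`. -/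
noncomputable def mergedComponent (A : Finset (Sym2 V)) (x y z : V) :
    (spanningGraph A).ConnectedComponent :=
  if (spanningGraph A).connectedComponentMk z = (spanningGraph A).connectedComponentMk y
  then (spanningGraph A).connectedComponentMk x
  else (spanningGraph A).connectedComponentMk z

variable {A B : Finset (Sym2 V)} {x y z w : V}

lemma eq_of_reachable_of_forall_adj {α : Type*} {G : SimpleGraph V} (f : V → α)
    (hf : ∀ x y, G.Adj x y → f x = f y) (hxy : G.Reachable x y) : f x = f y := by
  rw [reachable_iff_reflTransGen] at hxy
  exact hxy.trans_induction_on (fun _ => rfl) (hf _ _) fun _ _ => Eq.trans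

lemma spanningGraph_mono (h : A ⊆ B) : spanningGraph A ≤ spanningGraph B :=
  fromEdgeSet_mono (by exact_mod_cast h)

lemma componentOrder_eq_ncard_reachable :
    componentOrder A x = {z | (spanningGraph A).Reachable z x}.ncard := by
  simp only [componentOrder, ConnectedComponent.supp, ConnectedComponent.eq]

lemma componentOrder_eq_one_iff :
    componentOrder A x = 1 ↔ (spanningGraph A).IsIsolated x := by
  rw [componentOrder_eq_ncard_reachable, Set.ncard_eq_one]
  constructor
  · rintro ⟨c, hc⟩ y hxy
    have eq_c {z : V} (hz : (spanningGraph A).Reachable z x) : z = c := hc.subset hz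
    exact hxy.ne ((eq_c .rfl).trans (eq_c hxy.symm.reachable).symm)
  · intro hx
    refine ⟨x, Set.eq_singleton_iff_unique_mem.2 ⟨.rfl, fun z hz => ?_⟩⟩
    obtain ⟨p⟩ := Reachable.symm hz
    cases p with
    | nil => rfl
    | cons hxy _ => exact absurd hxy (hx _)

section Fintype

variable [Fintype V]

lemma mem_edgeSetType {m : ℕ} : m ∈ edgeSetType A ↔ ∃ x, componentOrder A x = m := by
  simp [edgeSetType, componentOrder]

lemma pos_of_mem_edgeSetType {m : ℕ} (hm : m ∈ edgeSetType A) : 0 < m := by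
  obtain ⟨x, rfl⟩ := mem_edgeSetType.1 hm
  exact (Set.ncard_pos).2 (ConnectedComponent.nonempty_supp _)

lemma one_mem_edgeSetType_iff : 1 ∈ edgeSetType A ↔ ∃ x, (spanningGraph A).IsIsolated x := by
  simp only [mem_edgeSetType, componentOrder_eq_one_iff]

lemma one_notMem_edgeSetType_mono (h : A ⊆ B) (hA : 1 ∉ edgeSetType A) :
    1 ∉ edgeSetType B := by
  rw [one_mem_edgeSetType_iff] at hA ⊢
  exact fun ⟨x, hx⟩ => hA ⟨x, fun y hxy => hx y (spanningGraph_mono h hxy)⟩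

lemma edgeSetType_eq_sum (A : Finset (Sym2 V)) [Fintype (spanningGraph A).ConnectedComponent] :
    edgeSetType A = ∑ c : (spanningGraph A).ConnectedComponent, {c.supp.ncard} := by
  classical
  have himage : univ.image (spanningGraph A).connectedComponentMk = univ :=
    image_univ_of_surjective Quot.mk_surjective
  rw [← himage, ← Multiset.sum_map_singleton (edgeSetType A), edgeSetType, Multiset.map_map]
  rfl

lemma card_edgeSetType (A : Finset (Sym2 V)) :
    (edgeSetType A).card = Nat.card (spanningGraph A).ConnectedComponent := by
  classical simp [edgeSetType_eq_sum]

lemma card_edgeSetType_antitone (h : A ⊆ B) :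
    (edgeSetType B).card ≤ (edgeSetType A).card := by
  rw [card_edgeSetType, card_edgeSetType]
  exact Nat.card_le_card_of_surjective _
    (ConnectedComponent.surjective_map_ofLE (spanningGraph_mono h))

lemma edgeSetType_eq_sum_fiber {α : Type*} [DecidableEq α] (f : V → α)
    (hf : ∀ x y, (spanningGraph A).Reachable x y ↔ f x = f y) :
    edgeSetType A = ∑ a ∈ univ.image f, {{x | f x = a}.ncard} := by
  classical
  rw [edgeSetType_eq_sum]
  let g : (spanningGraph A).ConnectedComponent → α := Quot.lift f fun x y => (hf x y).1
  have hg : g.Injective := by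
    rintro ⟨x⟩ ⟨y⟩ hxy
    exact ConnectedComponent.sound ((hf x y).2 hxy)
  have himage : univ.image f = univ.image g := by
    have hsurj : Function.Surjective (spanningGraph A).connectedComponentMk := Quot.mk_surjective
    rw [← image_univ_of_surjective hsurj, image_image]
    rfl
  rw [himage, sum_image hg.injOn]
  refine sum_congr rfl ?_
  rintro ⟨x⟩ -
  congr 2
  ext z
  exact ConnectedComponent.eq.trans (hf z x)

lemma sum_edgeSetType (A : Finset (Sym2 V)) : (edgeSetType A).sum = Fintype.card V := by
  classical
  rw [edgeSetType_eq_sum_fiber (spanningGraph A).connectedComponentMk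
    fun _ _ => ConnectedComponent.eq.symm, Multiset.sum_sum, ← card_univ,
    card_eq_sum_card_image (spanningGraph A).connectedComponentMk]
  refine sum_congr rfl fun c _ => ?_
  rw [Multiset.sum_singleton, Set.ncard_eq_toFinset_card', Set.toFinset_ofPred]

end Fintype

section MergedComponent

lemma image_mergedComponent [Fintype V] [Fintype (spanningGraph A).ConnectedComponent]
    [DecidableEq (spanningGraph A).ConnectedComponent] (hxy : ¬ (spanningGraph A).Reachable x y) :
    univ.image (mergedComponent A x y) =
      univ.erase ((spanningGraph A).connectedComponentMk y) := by
  ext c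
  simp only [mem_image, mem_univ, true_and, mem_erase, and_true]
  constructor
  · rintro ⟨z, rfl⟩ h
    unfold mergedComponent at h
    split_ifs at h with hz
    exacts [hxy (ConnectedComponent.exact h), hz h]
  · intro hc
    obtain ⟨z, rfl⟩ := c.exists_rep
    exact ⟨z, if_neg hc⟩

lemma ncard_mergedComponent_eq_left [Finite V] (hxy : ¬ (spanningGraph A).Reachable x y) :
    {z | mergedComponent A x y z = (spanningGraph A).connectedComponentMk x}.ncard =
      componentOrder A x + componentOrder A y := by
  have hne : (spanningGraph A).connectedComponentMk x ≠ (spanningGraph A).connectedComponentMk y :=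
    fun h => hxy (ConnectedComponent.exact h)
  rw [componentOrder, componentOrder, ← Set.ncard_union_eq]
  · congr 1
    ext z
    simp only [mergedComponent, Set.mem_ofPred_eq, Set.mem_union, ConnectedComponent.mem_supp_iff]
    split_ifs with hz <;> simp [hz]
  · rw [Set.disjoint_left]
    exact fun z hx hy => hne (hx.symm.trans hy)

lemma setOf_mergedComponent_eq {c : (spanningGraph A).ConnectedComponent}
    (hx : c ≠ (spanningGraph A).connectedComponentMk x)
    (hy : c ≠ (spanningGraph A).connectedComponentMk y) :
    {z | mergedComponent A x y z = c} = c.supp := by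
  ext z
  simp only [mergedComponent, Set.mem_ofPred_eq, ConnectedComponent.mem_supp_iff]
  split_ifs with hz
  · exact iff_of_false hx.symm (hz ▸ hy.symm)
  · rfl

end MergedComponent

section Insert

variable [DecidableEq V]

lemma adj_spanningGraph_insert (hxy : x ≠ y) : (spanningGraph (insert s(x, y) A)).Adj x y := by
  simpa using hxy

lemma reachable_mergedComponent (hxy : x ≠ y) :
    mergedComponent A x y z = (spanningGraph A).connectedComponentMk w →
      (spanningGraph (insert s(x, y) A)).Reachable z w := by
  have hle := spanningGraph_mono (subset_insert s(x, y) A)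
  unfold mergedComponent
  split_ifs with hz
  · intro hw
    exact ((ConnectedComponent.exact hz).mono hle).trans <|
      (adj_spanningGraph_insert hxy).symm.reachable.trans ((ConnectedComponent.exact hw).mono hle)
  · exact fun hw => (ConnectedComponent.exact hw).mono hle

lemma reachable_spanningGraph_insert_iff (hxy : x ≠ y) :
    (spanningGraph (insert s(x, y) A)).Reachable z w ↔
      mergedComponent A x y z = mergedComponent A x y w := by
  constructor
  · refine eq_of_reachable_of_forall_adj _ fun a b hab => ?_
    obtain ⟨hab | hab, hne⟩ : (s(a, b) = s(x, y) ∨ s(a, b) ∈ A) ∧ a ≠ b := by simpa using hab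
    · obtain ⟨rfl, rfl⟩ | ⟨rfl, rfl⟩ := Sym2.eq_iff.1 hab <;> simp [mergedComponent]
    · have : (spanningGraph A).connectedComponentMk a = (spanningGraph A).connectedComponentMk b :=
        ConnectedComponent.sound (Adj.reachable (by simpa using ⟨hab, hne⟩))
      rw [mergedComponent, mergedComponent, this]
  · intro h
    obtain ⟨v, hv⟩ := (mergedComponent A x y z).exists_rep
    exact (reachable_mergedComponent hxy hv.symm).trans
      (reachable_mergedComponent hxy (h.symm.trans hv.symm)).symm

lemma edgeSetType_insert_add [Fintype V] (hxy : ¬ (spanningGraph A).Reachable x y) :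
    edgeSetType (insert s(x, y) A) + {componentOrder A x, componentOrder A y} =
      edgeSetType A + {componentOrder A x + componentOrder A y} := by
  classical
  have hne : x ≠ y := fun h => hxy (h ▸ .rfl)
  set cx := (spanningGraph A).connectedComponentMk x with hcx
  set cy := (spanningGraph A).connectedComponentMk y with hcy
  have hmem : cx ∈ univ.erase cy :=
    mem_erase.2 ⟨fun h => hxy (ConnectedComponent.exact h), mem_univ _⟩
  have hrest : ∀ c ∈ (univ.erase cy).erase cx,
      ({{z | mergedComponent A x y z = c}.ncard} : Multiset ℕ) = {c.supp.ncard} := by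
    intro c hc
    simp only [mem_erase, mem_univ, and_true] at hc
    rw [setOf_mergedComponent_eq hc.1 hc.2]
  rw [edgeSetType_eq_sum_fiber (mergedComponent A x y)
      fun _ _ => reachable_spanningGraph_insert_iff hne, edgeSetType_eq_sum A,
    image_mergedComponent hxy, ← add_sum_erase _ _ (mem_univ cy), ← add_sum_erase _ _ hmem,
    ← add_sum_erase _ _ hmem, sum_congr rfl hrest, hcx, ncard_mergedComponent_eq_left hxy,
    Multiset.insert_eq_cons, ← Multiset.singleton_add]
  simp only [componentOrder, ← hcx, ← hcy]
  abel

lemma card_edgeSetType_insert [Fintype V] (hxy : ¬ (spanningGraph A).Reachable x y) :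
    (edgeSetType (insert s(x, y) A)).card + 1 = (edgeSetType A).card := by
  have := congrArg Multiset.card (edgeSetType_insert_add hxy)
  simp only [Multiset.card_add, Multiset.card_pair, Multiset.card_singleton] at this
  lia

end Insert

lemma card_edgeSetType_lt [Fintype V] (hAB : A ⊆ B) (hB : s(x, y) ∈ B)
    (hxy : ¬ (spanningGraph A).Reachable x y) :
    (edgeSetType B).card < (edgeSetType A).card := by
  classical
  rw [← card_edgeSetType_insert hxy, Nat.lt_succ_iff]
  exact card_edgeSetType_antitone (insert_subset hB hAB)

end EdgeSetType

section LeafEdges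

variable [Fintype V] {T : SimpleGraph V} [DecidableRel T.Adj] {A : Finset (Sym2 V)} {x y v w : V}

open Classical in
/-- The edges of `T` at least one of whose endpoints is a leaf. -/
noncomputable def leafEdges (T : SimpleGraph V) [DecidableRel T.Adj] : Finset (Sym2 V) :=
  {e | e ∈ T.edgeSet ∧ ∃ v ∈ e, T.degree v = 1}

/-- The unique neighbour of `v` if `v` is a leaf, and `v` itself otherwise. When no two leaves are
adjacent, the fibres of this map are the components of the graph of leaf edges. -/
noncomputable def anchor (T : SimpleGraph V) [DecidableRel T.Adj] (v : V) : V :=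
  if h : T.degree v = 1 then (degree_eq_one_iff_existsUnique_adj.1 h).choose else v

lemma mem_leafEdges :
    s(x, y) ∈ leafEdges T ↔ T.Adj x y ∧ (T.degree x = 1 ∨ T.degree y = 1) := by
  simp [leafEdges]

lemma leafEdges_subset_edgeSet : (leafEdges T : Set (Sym2 V)) ⊆ T.edgeSet := by
  intro e he
  simp only [leafEdges, coe_filter, Set.mem_ofPred_eq] at he
  exact he.2.1

lemma anchor_of_degree_ne_one (hv : T.degree v ≠ 1) : anchor T v = v :=
  dif_neg hv

lemma adj_iff_anchor_eq (hv : T.degree v = 1) : T.Adj v w ↔ anchor T v = w := by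
  obtain ⟨hadj, huniq⟩ := (degree_eq_one_iff_existsUnique_adj.1 hv).choose_spec
  rw [anchor, dif_pos hv]
  exact ⟨fun hw => (huniq w hw).symm, fun hw => hw ▸ hadj⟩

lemma leafEdges_subset (hA : (A : Set (Sym2 V)) ⊆ T.edgeSet) (hone : 1 ∉ edgeSetType A) :
    leafEdges T ⊆ A := by
  have mem_of_leaf {x y : V} (hxy : T.Adj x y) (hx : T.degree x = 1) : s(x, y) ∈ A := by
    rw [one_mem_edgeSetType_iff, not_exists] at hone
    obtain ⟨z, hz⟩ := exists_adj_iff_not_isIsolated.2 (hone x)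
    have hxz : s(x, z) ∈ A := by simpa using hz.1
    rwa [← (adj_iff_anchor_eq hx).1 hxy, (adj_iff_anchor_eq hx).1 (hA hxz)]
  rintro ⟨x, y⟩ hxy
  obtain ⟨hadj, hx | hy⟩ := mem_leafEdges.1 hxy
  · exact mem_of_leaf hadj hx
  · change s(x, y) ∈ A
    rw [Sym2.eq_swap]
    exact mem_of_leaf hadj.symm hy

lemma degree_ne_one_of_notMem_leafEdges (hxy : T.Adj x y) (hnot : s(x, y) ∉ leafEdges T) :
    T.degree x ≠ 1 ∧ T.degree y ≠ 1 := by
  simpa [mem_leafEdges, hxy] using hnot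

lemma ncard_anchor_eq (hv : T.degree v ≠ 1) : {x | anchor T x = v}.ncard = leafNum T v + 1 := by
  rw [leafNum, ← Set.ncard_insert_of_notMem (a := v) (by simp)]
  congr 1
  ext x
  simp only [Set.mem_ofPred_eq, Set.mem_insert_iff]
  by_cases hx : T.degree x = 1
  · have hne : x ≠ v := fun h => hv (h ▸ hx)
    simp [hx, hne, T.adj_comm v x, adj_iff_anchor_eq hx]
  · simp [hx, anchor_of_degree_ne_one hx]

lemma reachable_leafEdges_anchor (x : V) :
    (spanningGraph (leafEdges T)).Reachable x (anchor T x) := by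
  by_cases hx : T.degree x = 1
  · have hadj : T.Adj x (anchor T x) := (adj_iff_anchor_eq hx).2 rfl
    exact Adj.reachable ((fromEdgeSet_adj _).2 ⟨mem_leafEdges.2 ⟨hadj, .inl hx⟩, hadj.ne⟩)
  · rw [anchor_of_degree_ne_one hx]

end LeafEdges

/-- No two leaves of `T` are adjacent, every non-leaf vertex is adjacent to a leaf, and distinct
non-leaf vertices have distinct leaf numbers. Isolated vertices are thereby excluded, since they
are not leaves. -/
structure HasDistinctLeafNums [Fintype V] (T : SimpleGraph V) [DecidableRel T.Adj] : Prop where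
  degree_ne_one_of_adj : ∀ ⦃v w⦄, T.degree v = 1 → T.Adj v w → T.degree w ≠ 1
  leafNum_pos : ∀ ⦃v⦄, T.degree v ≠ 1 → 0 < leafNum T v
  leafNum_injOn : Set.InjOn (leafNum T) {v | T.degree v ≠ 1}

/-- The adjacency of non-leaf vertices, each replaced by its leaf number. -/
def LeafNumAdj [Fintype V] (T : SimpleGraph V) [DecidableRel T.Adj] (a b : ℕ) : Prop :=
  ∃ v w, T.Adj v w ∧ T.degree v ≠ 1 ∧ T.degree w ≠ 1 ∧ leafNum T v = a ∧ leafNum T w = b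

/-- The leaf number of the anchor of `v`, together with whether `v` is a leaf. This labelling
determines the graph, given `LeafNumAdj`. -/
noncomputable def leafLabel [Fintype V] (T : SimpleGraph V) [DecidableRel T.Adj] (v : V) :
    ℕ × Bool :=
  (leafNum T (anchor T v), decide (T.degree v = 1))

namespace HasDistinctLeafNums

variable [Fintype V] {T : SimpleGraph V} [DecidableRel T.Adj] {A : Finset (Sym2 V)}
  {x y v w : V} {m : ℕ}

lemma degree_anchor_ne_one (hT : HasDistinctLeafNums T) (v : V) :
    T.degree (anchor T v) ≠ 1 := by
  by_cases hv : T.degree v = 1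
  · exact hT.degree_ne_one_of_adj hv ((adj_iff_anchor_eq hv).2 rfl)
  · rwa [anchor_of_degree_ne_one hv]

lemma reachable_leafEdges_iff (hT : HasDistinctLeafNums T) :
    (spanningGraph (leafEdges T)).Reachable x y ↔ anchor T x = anchor T y := by
  constructor
  · refine eq_of_reachable_of_forall_adj _ fun x y hxy => ?_
    have anchor_eq {x y : V} (hxy : T.Adj x y) (hx : T.degree x = 1) : anchor T x = anchor T y := by
      rw [anchor_of_degree_ne_one (hT.degree_ne_one_of_adj hx hxy), (adj_iff_anchor_eq hx).1 hxy]
    obtain ⟨hadj, hx | hy⟩ := mem_leafEdges.1 ((fromEdgeSet_adj _).1 hxy).1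
    · exact anchor_eq hadj hx
    · exact (anchor_eq hadj.symm hy).symm
  · intro h
    exact (reachable_leafEdges_anchor x).trans (h ▸ (reachable_leafEdges_anchor y).symm)

lemma componentOrder_leafEdges (hT : HasDistinctLeafNums T) (hv : T.degree v ≠ 1) :
    componentOrder (leafEdges T) v = leafNum T v + 1 := by
  simp only [componentOrder_eq_ncard_reachable, hT.reachable_leafEdges_iff,
    anchor_of_degree_ne_one hv, ncard_anchor_eq hv]

lemma succ_mem_edgeSetType_leafEdges_iff (hT : HasDistinctLeafNums T) :
    m + 1 ∈ edgeSetType (leafEdges T) ↔ ∃ v, T.degree v ≠ 1 ∧ leafNum T v = m := by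
  rw [mem_edgeSetType]
  constructor
  · rintro ⟨x, hx⟩
    refine ⟨anchor T x, hT.degree_anchor_ne_one x, ?_⟩
    rw [componentOrder, ConnectedComponent.sound (reachable_leafEdges_anchor x),
      ← componentOrder, hT.componentOrder_leafEdges (hT.degree_anchor_ne_one x)] at hx
    exact Nat.succ_injective hx
  · rintro ⟨v, hv, rfl⟩
    exact ⟨v, hT.componentOrder_leafEdges hv⟩

lemma one_notMem_edgeSetType_leafEdges (hT : HasDistinctLeafNums T) :
    1 ∉ edgeSetType (leafEdges T) := by
  rw [← zero_add 1, hT.succ_mem_edgeSetType_leafEdges_iff]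
  exact fun ⟨v, hv, hzero⟩ => (hT.leafNum_pos hv).ne' hzero

lemma not_reachable_leafEdges (hT : HasDistinctLeafNums T) (hxy : T.Adj x y)
    (hx : T.degree x ≠ 1) (hy : T.degree y ≠ 1) :
    ¬ (spanningGraph (leafEdges T)).Reachable x y := by
  rw [hT.reachable_leafEdges_iff, anchor_of_degree_ne_one hx, anchor_of_degree_ne_one hy]
  exact hxy.ne

lemma edgeSetType_insert_leafEdges [DecidableEq V] (hT : HasDistinctLeafNums T)
    (hxy : T.Adj x y) (hx : T.degree x ≠ 1) (hy : T.degree y ≠ 1) :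
    edgeSetType (insert s(x, y) (leafEdges T)) + {leafNum T x + 1, leafNum T y + 1} =
      edgeSetType (leafEdges T) + {leafNum T x + 1 + (leafNum T y + 1)} := by
  rw [← hT.componentOrder_leafEdges hx, ← hT.componentOrder_leafEdges hy]
  exact edgeSetType_insert_add (hT.not_reachable_leafEdges hxy hx hy)

lemma eq_leafEdges_of_card_le (hT : HasDistinctLeafNums T) (hA : (A : Set (Sym2 V)) ⊆ T.edgeSet)
    (hsub : leafEdges T ⊆ A)
    (hcard : (edgeSetType (leafEdges T)).card ≤ (edgeSetType A).card) : A = leafEdges T := by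
  refine (hsub.antisymm ?_).symm
  rintro ⟨x, y⟩ hxy
  by_contra hnot
  obtain ⟨hx, hy⟩ := degree_ne_one_of_notMem_leafEdges (hA hxy) hnot
  exact hcard.not_gt <| card_edgeSetType_lt hsub hxy (hT.not_reachable_leafEdges (hA hxy) hx hy)

/- Two distinct edges between non-leaf vertices join different pairs of components, since each
component of the graph of leaf edges contains only one non-leaf vertex. -/
lemma not_reachable_insert_leafEdges [DecidableEq V] (hT : HasDistinctLeafNums T)
    (hxy : T.Adj x y) (hx : T.degree x ≠ 1) (hy : T.degree y ≠ 1)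
    (hvw : T.Adj v w) (hv : T.degree v ≠ 1) (hw : T.degree w ≠ 1) (hne : s(v, w) ≠ s(x, y)) :
    ¬ (spanningGraph (insert s(x, y) (leafEdges T))).Reachable v w := by
  rw [reachable_spanningGraph_insert_iff hxy.ne]
  simp only [mergedComponent, ConnectedComponent.eq, hT.reachable_leafEdges_iff,
    anchor_of_degree_ne_one hy, anchor_of_degree_ne_one hv, anchor_of_degree_ne_one hw]
  have := hvw.ne
  have := Sym2.eq_iff.not.1 hne
  split_ifs <;> simp only [ConnectedComponent.eq, hT.reachable_leafEdges_iff,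
    anchor_of_degree_ne_one hx, anchor_of_degree_ne_one hv, anchor_of_degree_ne_one hw] <;> grind

lemma exists_eq_insert_leafEdges [DecidableEq V] (hT : HasDistinctLeafNums T)
    (hA : (A : Set (Sym2 V)) ⊆ T.edgeSet) (hsub : leafEdges T ⊆ A)
    (hcard : (edgeSetType A).card + 1 = (edgeSetType (leafEdges T)).card) :
    ∃ x y, T.Adj x y ∧ T.degree x ≠ 1 ∧ T.degree y ≠ 1 ∧ A = insert s(x, y) (leafEdges T) := by
  have hssub : leafEdges T ⊂ A := hsub.ssubset_of_ne fun h => by simp [h] at hcard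
  obtain ⟨⟨x, y⟩, hxyA, hxy⟩ := exists_of_ssubset hssub
  obtain ⟨hx, hy⟩ := degree_ne_one_of_notMem_leafEdges (hA hxyA) hxy
  have hinsert : insert s(x, y) (leafEdges T) ⊆ A := insert_subset hxyA hsub
  refine ⟨x, y, hA hxyA, hx, hy, (hinsert.antisymm ?_).symm⟩
  rintro ⟨v, w⟩ hvwA
  by_contra hvw
  obtain ⟨hne, hvw⟩ : s(v, w) ≠ s(x, y) ∧ s(v, w) ∉ leafEdges T := by simpa using hvw
  obtain ⟨hv, hw⟩ := degree_ne_one_of_notMem_leafEdges (hA hvwA) hvw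
  have hlt := card_edgeSetType_lt hinsert hvwA <|
    hT.not_reachable_insert_leafEdges (hA hxyA) hx hy (hA hvwA) hv hw hne
  have := card_edgeSetType_insert (hT.not_reachable_leafEdges (hA hxyA) hx hy)
  lia

lemma ncard_leafLabel_eq (hT : HasDistinctLeafNums T) (m : ℕ) (b : Bool) :
    {x | leafLabel T x = (m, b)}.ncard =
      if m + 1 ∈ edgeSetType (leafEdges T) then (if b then m else 1) else 0 := by
  have anchor_eq_iff {v : V} (hv : T.degree v ≠ 1) (x : V) :
      leafNum T (anchor T x) = leafNum T v ↔ anchor T x = v :=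
    hT.leafNum_injOn.eq_iff (hT.degree_anchor_ne_one x) hv
  split_ifs with hm hb <;> rw [hT.succ_mem_edgeSetType_leafEdges_iff] at hm
  · obtain ⟨v, hv, rfl⟩ := hm
    conv_rhs => rw [leafNum]
    congr 1
    ext x
    simp only [leafLabel, Set.mem_ofPred_eq, Prod.mk.injEq, anchor_eq_iff hv, hb,
      decide_eq_true_iff, T.adj_comm v]
    exact and_congr_left fun hx => (adj_iff_anchor_eq hx).symm
  · obtain ⟨v, hv, rfl⟩ := hm
    rw [Set.ncard_eq_one]
    refine ⟨v, Set.ext fun x => ?_⟩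
    simp only [leafLabel, Set.mem_ofPred_eq, Prod.mk.injEq, anchor_eq_iff hv,
      Bool.not_eq_true _ ▸ hb, decide_eq_false_iff_not, Set.mem_singleton_iff]
    constructor
    · rintro ⟨hxv, hx⟩
      rwa [anchor_of_degree_ne_one hx] at hxv
    · rintro rfl
      exact ⟨anchor_of_degree_ne_one hv, hv⟩
  · rw [Set.ncard_eq_zero, Set.eq_empty_iff_forall_notMem]
    exact fun x hx => hm ⟨anchor T x, hT.degree_anchor_ne_one x, congrArg Prod.fst hx⟩

lemma leafNumAdj_iff (hT : HasDistinctLeafNums T) (hv : T.degree v ≠ 1) (hw : T.degree w ≠ 1) :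
    LeafNumAdj T (leafNum T v) (leafNum T w) ↔ T.Adj v w := by
  constructor
  · rintro ⟨x, y, hxy, hx, hy, hxv, hyw⟩
    rwa [← hT.leafNum_injOn hx hv hxv, ← hT.leafNum_injOn hy hw hyw]
  · exact fun hvw => ⟨v, w, hvw, hv, hw, rfl, rfl⟩

lemma adj_iff_leafNum_anchor_eq (hT : HasDistinctLeafNums T) (hv : T.degree v = 1)
    (hw : T.degree w ≠ 1) : T.Adj v w ↔ leafNum T (anchor T v) = leafNum T (anchor T w) := by
  rw [hT.leafNum_injOn.eq_iff (hT.degree_anchor_ne_one v) (hT.degree_anchor_ne_one w),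
    anchor_of_degree_ne_one hw, adj_iff_anchor_eq hv]

lemma adj_iff_leafLabel (hT : HasDistinctLeafNums T) (v w : V) :
    T.Adj v w ↔
      (leafLabel T v).2 = false ∧ (leafLabel T w).2 = false ∧
          LeafNumAdj T (leafLabel T v).1 (leafLabel T w).1 ∨
        (leafLabel T v).2 ≠ (leafLabel T w).2 ∧ (leafLabel T v).1 = (leafLabel T w).1 := by
  by_cases hv : T.degree v = 1 <;> by_cases hw : T.degree w = 1
  · simpa [leafLabel, hv, hw] using fun h => hT.degree_ne_one_of_adj hv h hw
  · simp [leafLabel, hv, hw, hT.adj_iff_leafNum_anchor_eq hv hw]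
  · simp [leafLabel, hv, hw, T.adj_comm v, hT.adj_iff_leafNum_anchor_eq hw hv, eq_comm]
  · simp [leafLabel, hv, hw, anchor_of_degree_ne_one, hT.leafNumAdj_iff]

end HasDistinctLeafNums

section NCoeff

variable [Fintype V] [Fintype W] {G : SimpleGraph V} {H : SimpleGraph W} {lam : Multiset ℕ}

lemma NCoeff_pos_iff :
    0 < NCoeff G lam ↔
      ∃ A : Finset (Sym2 V), (A : Set (Sym2 V)) ⊆ G.edgeSet ∧ edgeSetType A = lam := by
  simp [NCoeff, card_pos, Finset.Nonempty]

lemma sum_eq_and_pos_of_NCoeff_pos (h : 0 < NCoeff G lam) :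
    lam.sum = Fintype.card V ∧ ∀ m ∈ lam, 0 < m := by
  obtain ⟨A, -, rfl⟩ := NCoeff_pos_iff.1 h
  exact ⟨sum_edgeSetType A, fun _ => pos_of_mem_edgeSetType⟩

lemma NCoeff_eq_of_forall_partition {n : ℕ} (hV : Fintype.card V = n) (hW : Fintype.card W = n)
    (h : ∀ lam : Multiset ℕ, lam.sum = n → (∀ m ∈ lam, 0 < m) → NCoeff G lam = NCoeff H lam) :
    NCoeff G = NCoeff H := by
  funext lam
  by_contra hne
  obtain hG | hH : 0 < NCoeff G lam ∨ 0 < NCoeff H lam := by lia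
  · obtain ⟨hsum, hpos⟩ := sum_eq_and_pos_of_NCoeff_pos hG
    exact hne (h lam (hsum.trans hV) hpos)
  · obtain ⟨hsum, hpos⟩ := sum_eq_and_pos_of_NCoeff_pos hH
    exact hne (h lam (hsum.trans hW) hpos)

lemma exists_edgeSetType_eq (h : NCoeff G = NCoeff H) {A : Finset (Sym2 V)}
    (hA : (A : Set (Sym2 V)) ⊆ G.edgeSet) :
    ∃ B : Finset (Sym2 W), (B : Set (Sym2 W)) ⊆ H.edgeSet ∧ edgeSetType B = edgeSetType A :=
  NCoeff_pos_iff.1 (h ▸ NCoeff_pos_iff.2 ⟨A, hA, rfl⟩)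

lemma exists_leafEdges_subset_edgeSetType_eq [DecidableRel H.Adj] (h : NCoeff G = NCoeff H)
    {A : Finset (Sym2 V)} (hA : (A : Set (Sym2 V)) ⊆ G.edgeSet) (hone : 1 ∉ edgeSetType A) :
    ∃ B : Finset (Sym2 W), (B : Set (Sym2 W)) ⊆ H.edgeSet ∧ leafEdges H ⊆ B ∧
      edgeSetType B = edgeSetType A := by
  obtain ⟨B, hB, hBA⟩ := exists_edgeSetType_eq h hA
  exact ⟨B, hB, leafEdges_subset hB (hBA ▸ hone), hBA⟩

end NCoeff

lemma eq_or_eq_swap_of_add_pair_eq {M N : Multiset ℕ} {a b c d : ℕ} (ha : 0 < a) (hb : 0 < b)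
    (hab : a ≠ b) (h : M + {a, b} = N + {a + b}) (h' : M + {c, d} = N + {c + d}) :
    a = c ∧ b = d ∨ a = d ∧ b = c := by
  have heq : ({a, b} + {c + d} : Multiset ℕ) = {c, d} + {a + b} := by
    apply add_left_cancel (a := M + N)
    calc M + N + ({a, b} + {c + d}) = (M + {a, b}) + (N + {c + d}) := by abel
      _ = (N + {a + b}) + (M + {c, d}) := by rw [h, h']
      _ = M + N + ({c, d} + {a + b}) := by abel
  have hamem : a ∈ ({c, d} + {a + b} : Multiset ℕ) := heq ▸ by simp
  have hbmem : b ∈ ({c, d} + {a + b} : Multiset ℕ) := heq ▸ by simp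
  simp only [Multiset.insert_eq_cons, Multiset.mem_add, Multiset.mem_cons,
    Multiset.mem_singleton] at hamem hbmem
  lia

section Reconstruction

variable [Fintype V] [Fintype W] {T : SimpleGraph V} {U : SimpleGraph W}
  [DecidableRel T.Adj] [DecidableRel U.Adj]

lemma card_edgeSetType_leafEdges_le (hT : HasDistinctLeafNums T) (hN : NCoeff T = NCoeff U) :
    (edgeSetType (leafEdges T)).card ≤ (edgeSetType (leafEdges U)).card := by
  obtain ⟨B, -, hsub, hB⟩ := exists_leafEdges_subset_edgeSetType_eq hN leafEdges_subset_edgeSet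
    hT.one_notMem_edgeSetType_leafEdges
  exact hB ▸ card_edgeSetType_antitone hsub

lemma edgeSetType_leafEdges_eq (hT : HasDistinctLeafNums T) (hU : HasDistinctLeafNums U)
    (hN : NCoeff T = NCoeff U) : edgeSetType (leafEdges T) = edgeSetType (leafEdges U) := by
  obtain ⟨B, hBU, hsub, hB⟩ := exists_leafEdges_subset_edgeSetType_eq hN leafEdges_subset_edgeSet
    hT.one_notMem_edgeSetType_leafEdges
  rw [← hB, hU.eq_leafEdges_of_card_le hBU hsub (hB ▸ card_edgeSetType_leafEdges_le hU hN.symm)]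

lemma LeafNumAdj.of_NCoeff_eq (hT : HasDistinctLeafNums T) (hU : HasDistinctLeafNums U)
    (hN : NCoeff T = NCoeff U) {a b : ℕ} (h : LeafNumAdj T a b) : LeafNumAdj U a b := by
  classical
  obtain ⟨v, w, hvw, hv, hw, rfl, rfl⟩ := h
  have hsub : ((insert s(v, w) (leafEdges T) : Finset _) : Set (Sym2 V)) ⊆ T.edgeSet := by
    rw [coe_insert]
    exact Set.insert_subset hvw leafEdges_subset_edgeSet
  obtain ⟨B, hBU, hUB, hB⟩ := exists_leafEdges_subset_edgeSetType_eq hN hsub <|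
    one_notMem_edgeSetType_mono (subset_insert _ _) hT.one_notMem_edgeSetType_leafEdges
  have hleaf := edgeSetType_leafEdges_eq hT hU hN
  obtain ⟨x, y, hxy, hx, hy, rfl⟩ := hU.exists_eq_insert_leafEdges hBU hUB <| by
    rw [hB, ← hleaf, card_edgeSetType_insert (hT.not_reachable_leafEdges hvw hv hw)]
  have htypeT := hT.edgeSetType_insert_leafEdges hvw hv hw
  have htypeU := hU.edgeSetType_insert_leafEdges hxy hx hy
  rw [hB, ← hleaf] at htypeU
  have hne : leafNum T v ≠ leafNum T w := fun h => hvw.ne (hT.leafNum_injOn hv hw h)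
  obtain ⟨h₁, h₂⟩ | ⟨h₁, h₂⟩ := eq_or_eq_swap_of_add_pair_eq (by lia) (by lia) (by lia)
    htypeT htypeU
  · exact ⟨x, y, hxy, hx, hy, by lia, by lia⟩
  · exact ⟨y, x, hxy.symm, hy, hx, by lia, by lia⟩

lemma exists_equiv_leafLabel_eq (hT : HasDistinctLeafNums T) (hU : HasDistinctLeafNums U)
    (hN : NCoeff T = NCoeff U) : ∃ e : V ≃ W, ∀ v, leafLabel U (e v) = leafLabel T v := by
  have hfiber (c : ℕ × Bool) : Nonempty ({v // leafLabel T v = c} ≃ {w // leafLabel U w = c}) := by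
    rw [← Finite.card_eq]
    have hcard : {v | leafLabel T v = c}.ncard = {w | leafLabel U w = c}.ncard := by
      rw [hT.ncard_leafLabel_eq, hU.ncard_leafLabel_eq, edgeSetType_leafEdges_eq hT hU hN]
    exact hcard
  exact ⟨Equiv.ofFiberEquiv fun c => (hfiber c).some, Equiv.ofFiberEquiv_map _⟩

theorem stmt_17_general (hT : HasDistinctLeafNums T) (hU : HasDistinctLeafNums U)
    (hN : NCoeff T = NCoeff U) : Nonempty (T ≃g U) := by
  obtain ⟨e, he⟩ := exists_equiv_leafLabel_eq hT hU hN
  have hadj (a b : ℕ) : LeafNumAdj U a b ↔ LeafNumAdj T a b :=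
    ⟨.of_NCoeff_eq hU hT hN.symm, .of_NCoeff_eq hT hU hN⟩
  exact ⟨e, fun {v w} => by
    rw [hT.adj_iff_leafLabel, hU.adj_iff_leafLabel, he, he, hadj]⟩

end Reconstruction

section Caterpillar

variable [Fintype V] {T : SimpleGraph V} [DecidableRel T.Adj]

lemma degree_ne_one_of_adj_of_connected {s v w : V} (hconn : T.Connected) (hs : 2 ≤ T.degree s)
    (hv : T.degree v = 1) (hvw : T.Adj v w) : T.degree w ≠ 1 := by
  intro hw
  have hsne {u : V} (hu : T.degree u = 1) : s ≠ u := by rintro rfl; lia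
  obtain ⟨p⟩ := hconn v s
  obtain ⟨⟨⟨a, b⟩, hab⟩, -, ha, hb⟩ := p.exists_boundary_dart {v, w} (.inl rfl) (by
    simp [hsne hv, hsne hw])
  apply hb
  obtain rfl | rfl := ha
  · exact .inr (((adj_iff_anchor_eq hv).1 hab).symm.trans ((adj_iff_anchor_eq hv).1 hvw))
  · exact .inl (((adj_iff_anchor_eq hw).1 hab).symm.trans ((adj_iff_anchor_eq hw).1 hvw.symm))

lemma IsCaterpillar.hasDistinctLeafNums (hT : IsCaterpillar T)
    (hpos : ∀ v, 2 ≤ T.degree v → 1 ≤ leafNum T v)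
    (hdist : ∀ v w, 2 ≤ T.degree v → 2 ≤ T.degree w → leafNum T v = leafNum T w → v = w) :
    HasDistinctLeafNums T := by
  obtain ⟨⟨hconn, -⟩, hspine, -, -⟩ := hT
  obtain ⟨s, hs, t, -, hst⟩ := (Set.one_lt_ncard).1 hspine
  have : Nontrivial V := ⟨s, t, hst⟩
  have two_le {v : V} (hv : T.degree v ≠ 1) : 2 ≤ T.degree v := by
    have := hconn.preconnected.degree_pos_of_nontrivial v
    lia
  exact {
    degree_ne_one_of_adj := fun _ _ => degree_ne_one_of_adj_of_connected hconn hs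
    leafNum_pos := fun v hv => hpos v (two_le hv)
    leafNum_injOn := fun v hv w hw => hdist v w (two_le hv) (two_le hw) }

end Caterpillar

/-- Let `T` and `U` be caterpillars, each with `n` vertices, in which every spine vertex
(vertex of degree ≥ 2) is adjacent to at least one leaf, and no two distinct spine vertices
have the same leaf number.  If `N_λ(T) = N_λ(U)` for every partition `λ` of `n`
(equivalently, `X_T = X_U`), then `T` and `U` are isomorphic. -/
theorem stmt_17 [Fintype V] [Fintype W] (T : SimpleGraph V) (U : SimpleGraph W)
    [DecidableRel T.Adj] [DecidableRel U.Adj]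
    (hT : IsCaterpillar T) (hU : IsCaterpillar U) (n : ℕ)
    (hVn : Fintype.card V = n) (hWn : Fintype.card W = n)
    (hTpos : ∀ v : V, 2 ≤ T.degree v → 1 ≤ leafNum T v)
    (hTdist : ∀ v w : V, 2 ≤ T.degree v → 2 ≤ T.degree w →
      leafNum T v = leafNum T w → v = w)
    (hUpos : ∀ v : W, 2 ≤ U.degree v → 1 ≤ leafNum U v)
    (hUdist : ∀ v w : W, 2 ≤ U.degree v → 2 ≤ U.degree w →
      leafNum U v = leafNum U w → v = w)
    (hN : ∀ lam : Multiset ℕ, lam.sum = n → (∀ m ∈ lam, 0 < m) →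
      NCoeff T lam = NCoeff U lam) :
    Nonempty (T ≃g U) := by
  exact stmt_17_general (hT.hasDistinctLeafNums hTpos hTdist) (hU.hasDistinctLeafNums hUpos hUdist)
    (NCoeff_eq_of_forall_partition hVn hWn hN)
end

section
/- Let G and H be squids, i.e., finite connected simple graphs each containing exactly one cycle (equivalently, connected with as many edges as vertices) and each having exactly one vertex of degree greater than 2. Suppose G and H have equal chromatic symmetric functions: for every finitely supported function α : ℕ → ℕ, the number of proper colorings κ : V(G) → ℕ with #κ⁻¹({i}) = α(i) for all i equals the number of proper colorings κ : V(H) → ℕ with #κ⁻¹({i}) = α(i) for all i. Then G and H are isomorphic as graphs. -/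
open SimpleGraph Finset

variable {V : Type*} {W : Type*}

/-- Two finite simple graphs have equal chromatic symmetric functions iff for every finitely
supported `α : ℕ → ℕ`, they have the same number of proper colorings `κ : V → ℕ` whose color
class `κ⁻¹({i})` has exactly `α i` elements, for all `i`. -/
def SameCSF [Fintype V] [Fintype W] (G : SimpleGraph V) (H : SimpleGraph W) : Prop :=
  ∀ α : ℕ →₀ ℕ,
    Nat.card {κ : V → ℕ // (∀ u w : V, G.Adj u w → κ u ≠ κ w) ∧
        ∀ i : ℕ, (κ ⁻¹' {i}).ncard = α i} =
      Nat.card {κ : W → ℕ // (∀ u w : W, H.Adj u w → κ u ≠ κ w) ∧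
        ∀ i : ℕ, (κ ⁻¹' {i}).ncard = α i}

/-- A squid: a finite connected simple graph containing exactly one cycle (equivalently,
connected with as many edges as vertices) having exactly one vertex of degree greater
than 2. -/
def IsSquid [Fintype V] (G : SimpleGraph V) [DecidableRel G.Adj] : Prop :=
  G.Connected ∧ Nat.card G.edgeSet = Fintype.card V ∧ ∃! v : V, 2 < G.degree v

/-!
Replace every colour by `k` copies of itself and fix which copy is used at the root, the vertex of
degree greater than `2`. The weighted number of colourings then becomes a polynomial in `k`, so that
it makes sense for any number `x` of copies, also for `x = ε` with `ε ^ 2 = 0`. For a squid with `n`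
vertices and a cycle of length `l + 1`, the constant coefficient is `± l p_n`, where `p_m` denotes
the `m`-th power sum of the weights, and the linear coefficient is a combination of the products
`p_m p_{n-m}`. Two colours already suffice to read off `l` and `n` and, for every `0 < k < n`, the
number of legs with at least `k` vertices plus the number of legs with at least `n - k` vertices.
As the cycle contributes at least three vertices, at most one leg has more than `n / 2` vertices,
and these sums determine the leg lengths.

Removing leaves other than the root reduces a squid to its cycle. Adding the leaves back one after
another places the squid inside an infinite squid, which puts it into a normal form determined by
`l` and the leg lengths.
-/

section ChromaticSymmetricFunction

variable {C R : Type*}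

lemma ncard_fiber_comp_eq_embDomain_iff [Finite V] (e : C ↪ ℕ) (a : C →₀ ℕ) (g : V → C) :
    (∀ i, ((e ∘ g) ⁻¹' {i}).ncard = a.embDomain e i) ↔ ∀ c, (g ⁻¹' {c}).ncard = a c := by
  have fiber_comp (c : C) : (e ∘ g) ⁻¹' {e c} = g ⁻¹' {c} := by ext v; simp
  refine ⟨fun h c => by rw [← fiber_comp, h, Finsupp.embDomain_apply_self], fun h i => ?_⟩
  by_cases hi : i ∈ Set.range e
  · obtain ⟨c, rfl⟩ := hi
    rw [fiber_comp, h, Finsupp.embDomain_apply_self]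
  · rw [Finsupp.embDomain_of_notMem_range e a i hi, Set.ncard_eq_zero,
      Set.eq_empty_iff_forall_notMem]
    rintro v rfl
    exact hi ⟨g v, rfl⟩

lemma exists_comp_eq_of_ncard_fiber_eq_embDomain [Finite V] (e : C ↪ ℕ) (a : C →₀ ℕ) (κ : V → ℕ)
    (h : ∀ i, (κ ⁻¹' {i}).ncard = a.embDomain e i) : ∃ g : V → C, e ∘ g = κ := by
  have mem_range (v : V) : κ v ∈ Set.range e := by
    by_contra hv
    have fiber_empty := h (κ v)
    rw [Finsupp.embDomain_of_notMem_range e a _ hv, Set.ncard_eq_zero] at fiber_empty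
    exact Set.notMem_empty v (fiber_empty ▸ rfl)
  choose g hg using mem_range
  exact ⟨g, funext hg⟩

lemma card_proper_ncard_fiber_eq [Finite V] (G : SimpleGraph V) (e : C ↪ ℕ) (a : C →₀ ℕ) :
    Nat.card {κ : {κ : V → C // ∀ u v, G.Adj u v → κ u ≠ κ v} //
        (fun c => (κ.1 ⁻¹' {c}).ncard) = a} =
      Nat.card {κ : V → ℕ // (∀ u v, G.Adj u v → κ u ≠ κ v) ∧
        ∀ i : ℕ, (κ ⁻¹' {i}).ncard = a.embDomain e i} := by
  refine Nat.card_eq_of_bijective (fun κ => ⟨e ∘ κ.1.1,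
    fun u v huv => e.injective.ne (κ.1.2 u v huv),
    (ncard_fiber_comp_eq_embDomain_iff e a _).2 (congrFun κ.2)⟩) ⟨fun κ κ' h => ?_, ?_⟩
  · exact Subtype.ext (Subtype.ext (e.injective.comp_left (congrArg Subtype.val h)))
  · rintro ⟨κ, proper, content⟩
    obtain ⟨g, rfl⟩ := exists_comp_eq_of_ncard_fiber_eq_embDomain e a κ content
    exact ⟨⟨⟨g, fun u v huv hg => proper u v huv (congrArg e hg)⟩,
      funext ((ncard_fiber_comp_eq_embDomain_iff e a g).1 content)⟩, rfl⟩

variable [Fintype V] [Fintype W] [Fintype C]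

lemma prod_comp_eq_prod_pow_ncard_fiber [CommMonoid R] (κ : V → C) (w : C → R) :
    ∏ v, w (κ v) = ∏ c, w c ^ (κ ⁻¹' {c}).ncard := by
  classical
  rw [← Finset.prod_fiberwise' univ κ w]
  refine Finset.prod_congr rfl fun c _ => ?_
  rw [Finset.prod_const, ← Set.ncard_coe_finset]
  congr 2
  ext v
  simp

open Classical in
/-- The chromatic symmetric function of `G` in the finitely many variables `w c`: the sum over the
proper colourings of `G` by `C` of the product of the weights of the colours used. -/
noncomputable def weightedColorings [CommSemiring R] (G : SimpleGraph V) (w : C → R) : R :=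
  ∑ κ : V → C with ∀ u v, G.Adj u v → κ u ≠ κ v, ∏ v, w (κ v)

theorem SameCSF.weightedColorings_eq [CommSemiring R] {G : SimpleGraph V} {H : SimpleGraph W}
    (h : SameCSF G H) (w : C → R) : weightedColorings G w = weightedColorings H w := by
  classical
  have card_fiber (a : C → ℕ) :
      Nat.card {κ : {κ : V → C // ∀ u v, G.Adj u v → κ u ≠ κ v} //
        (fun c => (κ.1 ⁻¹' {c}).ncard) = a} =
      Nat.card {κ : {κ : W → C // ∀ u v, H.Adj u v → κ u ≠ κ v} //
        (fun c => (κ.1 ⁻¹' {c}).ncard) = a} := by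
    obtain ⟨e⟩ : Nonempty (C ↪ ℕ) := ⟨(Fintype.equivFin C).toEmbedding.trans Fin.valEmbedding⟩
    have := card_proper_ncard_fiber_eq G e (Finsupp.equivFunOnFinite.symm a)
    rw [h, ← card_proper_ncard_fiber_eq H e] at this
    exact this
  let fiberEquiv a := Classical.choice (Finite.card_eq.1 (card_fiber a))
  rw [weightedColorings, weightedColorings,
    Finset.sum_subtype _ (fun _ => Finset.mem_filter_univ _),
    Finset.sum_subtype _ (fun _ => Finset.mem_filter_univ _)]
  refine Fintype.sum_equiv (Equiv.ofFiberEquiv fiberEquiv) _ _ fun κ => ?_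
  rw [prod_comp_eq_prod_pow_ncard_fiber, prod_comp_eq_prod_pow_ncard_fiber]
  have content_eq := Equiv.ofFiberEquiv_map fiberEquiv κ
  exact Finset.prod_congr rfl fun c _ => by rw [← congrFun content_eq c]

lemma weightedColorings_congr [CommSemiring R] {G : SimpleGraph V} {H : SimpleGraph W}
    (f : G ≃g H) (w : C → R) : weightedColorings G w = weightedColorings H w := by
  refine (Finset.sum_equiv (f.toEquiv.arrowCongr (Equiv.refl C)).symm (fun κ => ?_)
    fun κ _ => ?_).symm
  · simp only [mem_filter, mem_univ, true_and]
    exact (f.toEquiv.forall_congr fun u => f.toEquiv.forall_congr fun v =>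
      imp_congr_left f.map_adj_iff.symm).symm
  · exact (f.toEquiv.prod_comp (fun v => w (κ v))).symm

end ChromaticSymmetricFunction

section Wedge

variable {ι C R : Type*} {L : ι → ℕ}

/-- The inclusion of the `i`-th summand into a one-point union of graphs rooted at `0`; the common
root is `none`. -/
def wedgeVertex (i : ι) : Fin (L i + 1) ↪ Option (Σ i, Fin (L i)) where
  toFun := Fin.cases none fun j => some ⟨i, j⟩
  inj' x y := by cases x using Fin.cases <;> cases y using Fin.cases <;> simp

/-- The one-point union of the graphs `G i`, obtained by identifying their vertices `0`. -/
def wedge (G : ∀ i, SimpleGraph (Fin (L i + 1))) : SimpleGraph (Option (Σ i, Fin (L i))) :=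
  ⨆ i, (G i).map (wedgeVertex i)

lemma wedge_adj {G : ∀ i, SimpleGraph (Fin (L i + 1))} {a b : Option (Σ i, Fin (L i))} :
    (wedge G).Adj a b ↔
      ∃ i x y, (G i).Adj x y ∧ wedgeVertex i x = a ∧ wedgeVertex i y = b := by
  simp only [wedge, iSup_adj, map_adj]

/-- Reindexing the summands of a one-point union. -/
def wedgeReindex {ι' : Type*} (σ : ι' ≃ ι) (G : ∀ i, SimpleGraph (Fin (L i + 1))) :
    wedge (fun i => G (σ i)) ≃g wedge G where
  toEquiv := (Equiv.sigmaCongrLeft (β := fun i => Fin (L i)) σ).optionCongr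
  map_rel_iff' {a b} := by
    have map_vertex (i : ι') (x : Fin (L (σ i) + 1)) :
        (Equiv.sigmaCongrLeft (β := fun i => Fin (L i)) σ).optionCongr
          (wedgeVertex (L := fun i => L (σ i)) i x) = wedgeVertex (σ i) x := by
      cases x using Fin.cases <;> rfl
    rw [wedge_adj, wedge_adj, σ.surjective.exists]
    simp only [← map_vertex, EmbeddingLike.apply_eq_iff_eq]

lemma comp_wedgeVertex (κ : Option (Σ i, Fin (L i)) → C) (i : ι) :
    κ ∘ wedgeVertex i = Fin.cons (κ none) fun j => κ (some ⟨i, j⟩) := by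
  funext x
  cases x using Fin.cases <;> rfl

lemma proper_wedge_iff (G : ∀ i, SimpleGraph (Fin (L i + 1)))
    (κ : Option (Σ i, Fin (L i)) → C) :
    (∀ a b, (wedge G).Adj a b → κ a ≠ κ b) ↔
      ∀ i x y, (G i).Adj x y →
        (Fin.cons (κ none) fun j => κ (some ⟨i, j⟩) : Fin (L i + 1) → C) x ≠
          (Fin.cons (κ none) fun j => κ (some ⟨i, j⟩) : Fin (L i + 1) → C) y := by
  simp only [← comp_wedgeVertex, wedge_adj, Function.comp_apply]
  exact ⟨fun h i x y hxy => h _ _ ⟨i, x, y, hxy, rfl, rfl⟩,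
    by rintro h _ _ ⟨i, x, y, hxy, rfl, rfl⟩; exact h i x y hxy⟩

variable [Fintype C] [CommSemiring R]

open Classical in
/-- The part of `weightedColorings G w` in which the root `0` has colour `r`, without the weight of
the root. -/
noncomputable def rootedColorings {n : ℕ} (G : SimpleGraph (Fin (n + 1))) (w : C → R) (r : C) : R :=
  ∑ g : Fin n → C with ∀ x y, G.Adj x y →
    (Fin.cons r g : Fin (n + 1) → C) x ≠ (Fin.cons r g : Fin (n + 1) → C) y, ∏ j, w (g j)

theorem weightedColorings_wedge [Fintype ι] (G : ∀ i, SimpleGraph (Fin (L i + 1))) (w : C → R) :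
    weightedColorings (wedge G) w = ∑ r, w r * ∏ i, rootedColorings (G i) w r := by
  classical
  simp only [rootedColorings, Finset.prod_univ_sum, Finset.mul_sum, weightedColorings]
  rw [Finset.sum_sigma']
  refine Finset.sum_bij' (fun κ _ => ⟨κ none, fun i j => κ (some ⟨i, j⟩)⟩)
    (fun p _ a => a.elim p.1 fun ij => p.2 ij.1 ij.2) ?_ ?_ ?_ ?_ ?_
  · intro κ hκ
    simpa [Fintype.mem_piFinset] using (proper_wedge_iff G κ).1 (by simpa using hκ)
  · intro p hp
    simp only [mem_filter, mem_univ, true_and]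
    rw [proper_wedge_iff]
    simpa [Fintype.mem_piFinset] using hp
  · intro κ _
    funext a
    cases a <;> rfl
  · intro p _
    rfl
  · intro κ _
    rw [Fintype.prod_option, Fintype.prod_sigma]

end Wedge

section PathAndCycle

variable {C R : Type*}

/-- The sequence `κ` is a proper colouring of a path. -/
def ConsecutiveNe {n : ℕ} (κ : Fin (n + 1) → C) : Prop :=
  ∀ j : Fin n, κ j.castSucc ≠ κ j.succ

lemma consecutiveNe_cons {n : ℕ} {r : C} {κ : Fin (n + 1) → C} :
    ConsecutiveNe (Fin.cons r κ : Fin (n + 2) → C) ↔ r ≠ κ 0 ∧ ConsecutiveNe κ := by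
  simp [ConsecutiveNe, Fin.forall_fin_succ (n := n)]

lemma consecutiveNe_snoc {n : ℕ} {κ : Fin (n + 1) → C} {d : C} :
    ConsecutiveNe (Fin.snoc κ d : Fin (n + 2) → C) ↔ ConsecutiveNe κ ∧ κ (Fin.last n) ≠ d := by
  simp only [ConsecutiveNe, Fin.forall_fin_succ' (n := n), Fin.snoc_castSucc, Fin.succ_last,
    Fin.snoc_last, Fin.succ_castSucc]

lemma proper_pathGraph_iff {n : ℕ} (κ : Fin (n + 1) → C) :
    (∀ x y, (pathGraph (n + 1)).Adj x y → κ x ≠ κ y) ↔ ConsecutiveNe κ := by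
  simp only [pathGraph_adj]
  refine ⟨fun h j => h _ _ (by simp), fun h => ?_⟩
  have forward (x y : Fin (n + 1)) (hxy : x.val + 1 = y.val) : κ x ≠ κ y := by
    have y_eq_succ : y = Fin.succ ⟨x, by omega⟩ := Fin.ext hxy.symm
    rw [y_eq_succ]
    exact h ⟨x, by omega⟩
  rintro x y (hxy | hxy)
  exacts [forward x y hxy, (forward y x hxy).symm]

lemma cycleGraph_adj_iff_pathGraph {n : ℕ} {x y : Fin (n + 2)} :
    (cycleGraph (n + 2)).Adj x y ↔ (pathGraph (n + 2)).Adj x y ∨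
      (x = 0 ∧ y = Fin.last (n + 1)) ∨ (y = 0 ∧ x = Fin.last (n + 1)) := by
  wlog h : x ≤ y generalizing x y
  · rw [adj_comm, this (le_of_not_ge h), adj_comm, or_comm (a := x = 0 ∧ _)]
  rcases h.eq_or_lt with rfl | h
  · simp only [cycleGraph_adj', pathGraph_adj, Fin.ext_iff, sub_self, Fin.val_last, Fin.val_zero]
    omega
  · rw [cycleGraph_adj', pathGraph_adj, Fin.sub_val_of_le h.le, Fin.coe_sub_iff_lt.2 h]
    simp only [Fin.ext_iff, Fin.val_last, Fin.val_zero]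
    omega

lemma proper_cycleGraph_iff {n : ℕ} (κ : Fin (n + 2) → C) :
    (∀ x y, (cycleGraph (n + 2)).Adj x y → κ x ≠ κ y) ↔
      ConsecutiveNe κ ∧ κ (Fin.last (n + 1)) ≠ κ 0 := by
  rw [← proper_pathGraph_iff]
  simp only [cycleGraph_adj_iff_pathGraph]
  constructor
  · exact fun h => ⟨fun x y hxy => h x y (.inl hxy), h _ _ (.inr (.inr ⟨rfl, rfl⟩))⟩
  · rintro ⟨path, closing⟩ x y (hxy | ⟨rfl, rfl⟩ | ⟨rfl, rfl⟩)
    exacts [path x y hxy, closing.symm, closing]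

variable [Fintype C]

open Classical in
lemma rootedColorings_pathGraph [CommSemiring R] (n : ℕ) (w : C → R) (r : C) :
    rootedColorings (pathGraph (n + 1)) w r =
      ∑ g : Fin n → C,
        if ConsecutiveNe (Fin.cons r g : Fin (n + 1) → C) then ∏ j, w (g j) else 0 := by
  simp only [rootedColorings, Finset.sum_filter, ← proper_pathGraph_iff]

open Classical in
lemma rootedColorings_cycleGraph [CommSemiring R] (n : ℕ) (w : C → R) (r : C) :
    rootedColorings (cycleGraph (n + 2)) w r =
      ∑ g : Fin (n + 1) → C, if ConsecutiveNe (Fin.cons r g : Fin (n + 2) → C) ∧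
        g (Fin.last n) ≠ r then ∏ j, w (g j) else 0 := by
  simp only [rootedColorings, Finset.sum_filter]
  refine Finset.sum_congr rfl fun g _ => ?_
  congr! 1
  rw [proper_cycleGraph_iff, ← Fin.succ_last, Fin.cons_succ, Fin.cons_zero]

variable [CommRing R] (w : C → R) (r : C)

lemma rootedColorings_pathGraph_one : rootedColorings (pathGraph 1) w r = 1 := by
  simp [rootedColorings_pathGraph, ConsecutiveNe]

lemma rootedColorings_pathGraph_succ (n : ℕ) :
    rootedColorings (pathGraph (n + 2)) w r =
      ∑ d, w d * rootedColorings (pathGraph (n + 1)) w d -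
        w r * rootedColorings (pathGraph (n + 1)) w r := by
  classical
  calc rootedColorings (pathGraph (n + 2)) w r
    _ = ∑ d, if r ≠ d then w d * rootedColorings (pathGraph (n + 1)) w d else 0 := by
        rw [rootedColorings_pathGraph, ← (Fin.consEquiv fun _ => C).sum_comp,
          Fintype.sum_prod_type]
        simp only [Fin.consEquiv, Equiv.coe_fn_mk, consecutiveNe_cons, Fin.prod_univ_succ,
          Fin.cons_zero, Fin.cons_succ, rootedColorings_pathGraph, Finset.mul_sum, mul_ite,
          mul_zero, ite_and, Finset.sum_ite_irrel, Finset.sum_const_zero]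
    _ = _ := by
        rw [← Finset.sum_filter, Finset.filter_ne, ← Finset.add_sum_erase _ _ (Finset.mem_univ r)]
        ring

lemma rootedColorings_cycleGraph_two :
    rootedColorings (cycleGraph 2) w r = rootedColorings (pathGraph 2) w r := by
  rw [rootedColorings_cycleGraph, rootedColorings_pathGraph]
  refine Finset.sum_congr rfl fun g _ => ?_
  congr! 1
  simp [ConsecutiveNe, eq_comm]

lemma rootedColorings_cycleGraph_succ (n : ℕ) :
    rootedColorings (cycleGraph (n + 3)) w r =
      rootedColorings (pathGraph (n + 3)) w r - w r * rootedColorings (cycleGraph (n + 2)) w r := by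
  classical
  rw [eq_sub_iff_add_eq', ← eq_sub_iff_add_eq]
  calc w r * rootedColorings (cycleGraph (n + 2)) w r
    _ = ∑ g : Fin (n + 2) → C, if ConsecutiveNe (Fin.cons r g : Fin (n + 3) → C) ∧
          g (Fin.last (n + 1)) = r then ∏ j, w (g j) else 0 := by
        rw [rootedColorings_cycleGraph, Finset.mul_sum,
          ← (Fin.snocEquiv (n := n + 1) fun _ => C).sum_comp, Fintype.sum_prod_type_right]
        refine Finset.sum_congr rfl fun g _ => ?_
        simp only [Fin.snocEquiv, Equiv.coe_fn_mk, Fin.cons_snoc_eq_snoc_cons,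
          Fin.prod_univ_castSucc (n := n + 1), Fin.snoc_castSucc, Fin.snoc_last,
          consecutiveNe_snoc]
        simp [ite_and, and_comm (b := _ = r), mul_comm (w r)]
    _ = rootedColorings (pathGraph (n + 3)) w r - rootedColorings (cycleGraph (n + 3)) w r := by
        rw [rootedColorings_pathGraph, rootedColorings_cycleGraph, ← Finset.sum_sub_distrib]
        refine Finset.sum_congr rfl fun g _ => ?_
        by_cases hg : g (Fin.last (n + 1)) = r <;> simp [hg]

end PathAndCycle

section Squid

variable {C R : Type*}

/-- The squid whose cycle passes through the `L 0` non-root vertices of arm `0`, and whose legs are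
the other arms, the arm `i` having `L i` non-root vertices. -/
def squidGraph {N : ℕ} (L : Fin (N + 1) → ℕ) : SimpleGraph (Option (Σ i, Fin (L i))) :=
  wedge fun i => if i = 0 then cycleGraph (L i + 1) else pathGraph (L i + 1)

lemma nonempty_squidGraph_iso {N : ℕ} (L L' : Fin (N + 1) → ℕ) (h0 : L 0 = L' 0)
    (h : ∃ τ : Equiv.Perm (Fin N), ∀ i, Fin.tail L' (τ i) = Fin.tail L i) :
    Nonempty (squidGraph L ≃g squidGraph L') := by
  obtain ⟨τ, hτ⟩ := h
  let σ : Equiv.Perm (Fin (N + 1)) := Equiv.Perm.decomposeFin.symm (0, τ)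
  have σ_zero : σ 0 = 0 := by simp [σ]
  obtain rfl : L = L' ∘ σ := by
    funext i
    cases i using Fin.cases with
    | zero => simp [σ, h0]
    | succ i => simpa [σ, Fin.tail] using (hτ i).symm
  have := wedgeReindex σ fun i => if i = 0 then cycleGraph (L' i + 1) else pathGraph (L' i + 1)
  simp only [σ.injective.eq_iff' σ_zero] at this
  exact ⟨this⟩

variable [Fintype C]

/-- The weighted number of colourings of a leg with `l` vertices, attached to a root of colour `c`,
when every colour `d` comes in `x` copies of weight `w d`. -/
def legWeight [CommRing R] (x : R) (w : C → R) : ℕ → C → R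
  | 0, _ => 1
  | l + 1, c => x * ∑ d, w d * legWeight x w l d - w c * legWeight x w l c

/-- The analogue of `legWeight` for `l` vertices forming a cycle together with the root. -/
def arcWeight [CommRing R] (x : R) (w : C → R) : ℕ → C → R
  | 0, _ => 0
  | l + 1, c => legWeight x w (l + 1) c - w c * arcWeight x w l c

/-- The weighted number of colourings of a squid with a cycle of length `l + 1` and legs with `ls i`
vertices, when every colour comes in `x` copies, of which only one is used for the root. -/
def squidWeight [CommRing R] {ι : Type*} [Fintype ι] (x : R) (w : C → R) (l : ℕ) (ls : ι → ℕ) : R :=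
  ∑ c, w c * (arcWeight x w l c * ∏ i, legWeight x w (ls i) c)

variable [CommRing R] (w : C → R)

lemma rootedColorings_pathGraph_eq_legWeight (l : ℕ) (c : C) :
    rootedColorings (pathGraph (l + 1)) w c = legWeight 1 w l c := by
  induction l generalizing c with
  | zero => exact rootedColorings_pathGraph_one w c
  | succ l ih => simp only [rootedColorings_pathGraph_succ, legWeight, ih, one_mul]

lemma rootedColorings_cycleGraph_eq_arcWeight (l : ℕ) (c : C) :
    rootedColorings (cycleGraph (l + 2)) w c = arcWeight 1 w (l + 1) c := by
  induction l with
  | zero =>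
    rw [rootedColorings_cycleGraph_two, rootedColorings_pathGraph_eq_legWeight, arcWeight,
      arcWeight, mul_zero, sub_zero]
  | succ l ih =>
    rw [rootedColorings_cycleGraph_succ, rootedColorings_pathGraph_eq_legWeight, ih]
    rfl

theorem weightedColorings_squidGraph {N : ℕ} (L : Fin (N + 1) → ℕ) (h0 : L 0 ≠ 0) :
    weightedColorings (squidGraph L) w = squidWeight 1 w (L 0) (Fin.tail L) := by
  obtain ⟨l, hl⟩ := Nat.exists_eq_succ_of_ne_zero h0
  have cycle_arm (c : C) : rootedColorings (cycleGraph (L 0 + 1)) w c = arcWeight 1 w (L 0) c := by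
    rw [hl]
    exact rootedColorings_cycleGraph_eq_arcWeight w l c
  simp only [squidGraph, weightedColorings_wedge, squidWeight, Fin.prod_univ_succ, if_true,
    Fin.succ_ne_zero, if_false, cycle_arm, rootedColorings_pathGraph_eq_legWeight, Fin.tail]

end Squid

section Replication

variable {C R S ι : Type*} [Fintype C] [Fintype ι] [CommRing R] [CommRing S]

lemma legWeight_replicate (k : ℕ) (w : C → R) (l : ℕ) (p : C × Fin k) :
    legWeight 1 (fun p : C × Fin k => w p.1) l p = legWeight (k : R) w l p.1 := by
  induction l generalizing p with
  | zero => rfl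
  | succ l ih => simp [legWeight, ih, Fintype.sum_prod_type, Finset.mul_sum]

lemma arcWeight_replicate (k : ℕ) (w : C → R) (l : ℕ) (p : C × Fin k) :
    arcWeight 1 (fun p : C × Fin k => w p.1) l p = arcWeight (k : R) w l p.1 := by
  induction l with
  | zero => rfl
  | succ l ih => simp only [arcWeight, ih, legWeight_replicate]

lemma squidWeight_replicate (k : ℕ) (w : C → R) (l : ℕ) (ls : ι → ℕ) :
    squidWeight 1 (fun p : C × Fin k => w p.1) l ls = k * squidWeight (k : R) w l ls := by
  simp [squidWeight, arcWeight_replicate, legWeight_replicate, Fintype.sum_prod_type,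
    Finset.mul_sum]

lemma map_legWeight (f : R →+* S) (x : R) (w : C → R) (l : ℕ) (c : C) :
    f (legWeight x w l c) = legWeight (f x) (f ∘ w) l c := by
  induction l generalizing c with
  | zero => exact map_one f
  | succ l ih => simp [legWeight, ih]

lemma map_arcWeight (f : R →+* S) (x : R) (w : C → R) (l : ℕ) (c : C) :
    f (arcWeight x w l c) = arcWeight (f x) (f ∘ w) l c := by
  induction l with
  | zero => exact map_zero f
  | succ l ih => simp [arcWeight, ih, map_legWeight]

lemma map_squidWeight (f : R →+* S) (x : R) (w : C → R) (l : ℕ) (ls : ι → ℕ) :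
    f (squidWeight x w l ls) = squidWeight (f x) (f ∘ w) l ls := by
  simp [squidWeight, map_arcWeight, map_legWeight]

lemma eval_squidWeight_X (w : C → R) (l : ℕ) (ls : ι → ℕ) (k : R) :
    (squidWeight Polynomial.X (Polynomial.C ∘ w) l ls).eval k = squidWeight k w l ls := by
  rw [← Polynomial.coe_evalRingHom, map_squidWeight, Polynomial.coe_evalRingHom,
    Polynomial.eval_X]
  exact congrArg (squidWeight k · l ls) (funext fun c => Polynomial.eval_C)

lemma aeval_squidWeight_X [Algebra R S] (w : C → R) (l : ℕ) (ls : ι → ℕ) (x : S) :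
    Polynomial.aeval x (squidWeight Polynomial.X (Polynomial.C ∘ w) l ls) =
      squidWeight x (algebraMap R S ∘ w) l ls := by
  rw [← AlgHom.coe_toRingHom, map_squidWeight, AlgHom.coe_toRingHom, Polynomial.aeval_X]
  exact congrArg (squidWeight x · l ls) (funext fun c => Polynomial.aeval_C x (w c))

theorem squidWeight_eq_of_forall_natCast [IsDomain R] [CharZero R] {ι' : Type*} [Fintype ι']
    [Algebra R S] (w : C → R) {l l' : ℕ} {ls : ι → ℕ} {ls' : ι' → ℕ}
    (h : ∀ k : ℕ, k ≠ 0 → squidWeight (k : R) w l ls = squidWeight (k : R) w l' ls') (x : S) :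
    squidWeight x (algebraMap R S ∘ w) l ls = squidWeight x (algebraMap R S ∘ w) l' ls' := by
  have infinite_range : (Set.range fun k : ℕ => ((k + 1 : ℕ) : R)).Infinite :=
    Set.infinite_range_of_injective (Nat.cast_injective.comp (add_left_injective 1))
  rw [← aeval_squidWeight_X, ← aeval_squidWeight_X]
  congr 1
  refine Polynomial.eq_of_infinite_eval_eq _ _ (infinite_range.mono ?_)
  rintro _ ⟨k, rfl⟩
  simpa only [Set.mem_ofPred_eq, eval_squidWeight_X] using h _ k.succ_ne_zero

end Replication

section Linearization

variable {C R S ι : Type*} [Fintype C] [CommRing R] [CommRing S]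

/-- The power sum `p_m` in the variables `w c`. -/
def powerSum (w : C → R) (m : ℕ) : R := ∑ c, w c ^ m

/-- Up to sign, the linear coefficient in `x` of a colouring weight, homogeneous of degree `n`, that
a leg with `l` vertices contributes when the root has weight `t`. -/
def legSum (w : C → R) (n l : ℕ) (t : R) : R := ∑ m ∈ Icc 1 l, t ^ (n - m) * powerSum w m

/-- The sum of `p_{n-m} p_m` over `1 ≤ m ≤ l`. -/
def powerSumPairs (w : C → R) (n l : ℕ) : R := ∑ m ∈ Icc 1 l, powerSum w (n - m) * powerSum w m

lemma legSum_succ (w : C → R) (l : ℕ) (t : R) :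
    legSum w (l + 1) (l + 1) t = t * legSum w l l t + powerSum w (l + 1) := by
  rw [legSum, Finset.sum_Icc_succ_top (by omega), Nat.sub_self, pow_zero, one_mul, legSum,
    Finset.mul_sum]
  congr 1
  refine Finset.sum_congr rfl fun m hm => ?_
  rw [Nat.succ_sub (Finset.mem_Icc.1 hm).2, pow_succ']
  ring

lemma pow_mul_legSum (w : C → R) {n l : ℕ} (hl : l ≤ n) (k : ℕ) (t : R) :
    t ^ k * legSum w n l t = legSum w (n + k) l t := by
  rw [legSum, legSum, Finset.mul_sum]
  refine Finset.sum_congr rfl fun m hm => ?_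
  rw [Nat.sub_add_comm ((Finset.mem_Icc.1 hm).2.trans hl)]
  ring

lemma sum_mul_legSum (w : C → R) {n l : ℕ} (hl : l ≤ n) :
    ∑ c, w c * legSum w n l (w c) = powerSumPairs w (n + 1) l := by
  have mul_legSum (c : C) : w c * legSum w n l (w c) = legSum w (n + 1) l (w c) := by
    rw [← pow_mul_legSum w hl, pow_one]
  simp only [mul_legSum]
  simp only [legSum, powerSumPairs]
  rw [Finset.sum_comm]
  simp only [← Finset.sum_mul, powerSum]

lemma map_powerSum (f : R →+* S) (w : C → R) (m : ℕ) :
    f (powerSum w m) = powerSum (f ∘ w) m := by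
  simp [powerSum]

lemma map_powerSumPairs (f : R →+* S) (w : C → R) (n l : ℕ) :
    f (powerSumPairs w n l) = powerSumPairs (f ∘ w) n l := by
  simp [powerSumPairs, map_powerSum]

lemma legWeight_of_mul_self_eq_zero {x : R} (hx : x * x = 0) (w : C → R) (l : ℕ) (c : C) :
    legWeight x w l c = (-1) ^ l * (w c ^ l - x * legSum w l l (w c)) := by
  induction l generalizing c with
  | zero => simp [legWeight, legSum]
  | succ l ih =>
    have tail_sum : x * ∑ d, w d * legWeight x w l d = (-1) ^ l * (x * powerSum w (l + 1)) := by
      simp only [powerSum, Finset.mul_sum, ih]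
      refine Finset.sum_congr rfl fun d _ => ?_
      linear_combination (-(w d * (-1) ^ l * legSum w l l (w d))) * hx
    rw [legWeight, tail_sum, ih, legSum_succ]
    ring

lemma arcWeight_of_mul_self_eq_zero {x : R} (hx : x * x = 0) (w : C → R) (l : ℕ) (c : C) :
    arcWeight x w l c =
      (-1) ^ l * (l * w c ^ l - x * ∑ j ∈ Icc 1 l, legSum w l j (w c)) := by
  induction l with
  | zero => simp [arcWeight]
  | succ l ih =>
    have legSum_step : ∑ j ∈ Icc 1 l, legSum w (l + 1) j (w c) =
        w c * ∑ j ∈ Icc 1 l, legSum w l j (w c) := by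
      rw [Finset.mul_sum]
      refine Finset.sum_congr rfl fun j hj => ?_
      rw [← pow_mul_legSum w (Finset.mem_Icc.1 hj).2 1, pow_one]
    rw [arcWeight, ih, legWeight_of_mul_self_eq_zero hx, Finset.sum_Icc_succ_top (by omega),
      legSum_step]
    push_cast
    ring

lemma prod_legWeight_of_mul_self_eq_zero {x : R} (hx : x * x = 0) (w : C → R) (s : Finset ι)
    (ls : ι → ℕ) (c : C) :
    ∏ i ∈ s, legWeight x w (ls i) c = (-1) ^ (∑ i ∈ s, ls i) *
      (w c ^ (∑ i ∈ s, ls i) - x * ∑ i ∈ s, legSum w (∑ i ∈ s, ls i) (ls i) (w c)) := by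
  classical
  induction s using Finset.induction_on with
  | empty => simp
  | insert a s ha ih =>
    have legSum_head : legSum w (ls a + ∑ i ∈ s, ls i) (ls a) (w c) =
        w c ^ (∑ i ∈ s, ls i) * legSum w (ls a) (ls a) (w c) :=
      (pow_mul_legSum w le_rfl _ _).symm
    have legSum_tail : ∑ i ∈ s, legSum w (ls a + ∑ i ∈ s, ls i) (ls i) (w c) =
        w c ^ ls a * ∑ i ∈ s, legSum w (∑ i ∈ s, ls i) (ls i) (w c) := by
      rw [Finset.mul_sum, add_comm]
      exact Finset.sum_congr rfl fun i hi =>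
        (pow_mul_legSum w (Finset.single_le_sum_of_canonicallyOrdered hi) _ _).symm
    rw [Finset.prod_insert ha, ih]
    simp only [Finset.sum_insert ha, legSum_head, legSum_tail,
      legWeight_of_mul_self_eq_zero hx, pow_add]
    linear_combination (-1) ^ ls a * (-1) ^ (∑ i ∈ s, ls i) * legSum w (ls a) (ls a) (w c) *
      (∑ i ∈ s, legSum w (∑ i ∈ s, ls i) (ls i) (w c)) * hx

theorem squidWeight_of_mul_self_eq_zero [Fintype ι] {x : R} (hx : x * x = 0) (w : C → R) (l : ℕ)
    (ls : ι → ℕ) :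
    squidWeight x w l ls = (-1) ^ (l + ∑ i, ls i) * (l * powerSum w (l + ∑ i, ls i + 1) -
      x * (∑ j ∈ Icc 1 l, powerSumPairs w (l + ∑ i, ls i + 1) j +
        l * ∑ i, powerSumPairs w (l + ∑ i, ls i + 1) (ls i))) := by
  have arc_pairs : ∑ j ∈ Icc 1 l, powerSumPairs w (l + ∑ i, ls i + 1) j =
      ∑ c, w c ^ (1 + ∑ i, ls i) * ∑ j ∈ Icc 1 l, legSum w l j (w c) := by
    simp only [Finset.mul_sum]
    rw [Finset.sum_comm]
    refine Finset.sum_congr rfl fun j hj => ?_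
    have hjl := (Finset.mem_Icc.1 hj).2
    rw [← sum_mul_legSum w (by omega)]
    simp only [← pow_mul_legSum w hjl, pow_add, pow_one, mul_assoc]
  have leg_pairs : ∑ i, powerSumPairs w (l + ∑ i, ls i + 1) (ls i) =
      ∑ c, w c ^ (1 + l) * ∑ i, legSum w (∑ i, ls i) (ls i) (w c) := by
    simp only [Finset.mul_sum]
    rw [Finset.sum_comm]
    refine Finset.sum_congr rfl fun i hi => ?_
    have hi := Finset.single_le_sum_of_canonicallyOrdered (f := ls) hi
    rw [← sum_mul_legSum w (by omega), add_comm l]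
    simp only [← pow_mul_legSum w hi, pow_add, pow_one, mul_assoc]
  simp only [squidWeight, arcWeight_of_mul_self_eq_zero hx, prod_legWeight_of_mul_self_eq_zero hx,
    arc_pairs, leg_pairs, powerSum, Finset.mul_sum (s := (univ : Finset C)),
    ← Finset.sum_add_distrib, ← Finset.sum_sub_distrib]
  refine Finset.sum_congr rfl fun c _ => ?_
  linear_combination (-1) ^ (l + ∑ i, ls i) * w c * (∑ j ∈ Icc 1 l, legSum w l j (w c)) *
    (∑ i, legSum w (∑ i, ls i) (ls i) (w c)) * hx

open DualNumber

lemma squidWeight_eps [Fintype ι] (w : C → R) (l : ℕ) (ls : ι → ℕ) :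
    squidWeight ε (algebraMap R R[ε] ∘ w) l ls =
      .inl ((-1) ^ (l + ∑ i, ls i) * (l * powerSum w (l + ∑ i, ls i + 1))) +
      .inr (-(-1) ^ (l + ∑ i, ls i) * (∑ j ∈ Icc 1 l, powerSumPairs w (l + ∑ i, ls i + 1) j +
        l * ∑ i, powerSumPairs w (l + ∑ i, ls i + 1) (ls i))) := by
  have powerSum_inl (m : ℕ) : powerSum (algebraMap R R[ε] ∘ w) m = .inl (powerSum w m) :=
    (map_powerSum _ w m).symm
  have pairs_inl (n m : ℕ) :
      powerSumPairs (algebraMap R R[ε] ∘ w) n m = .inl (powerSumPairs w n m) :=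
    (map_powerSumPairs _ w n m).symm
  have sign_inl (a : ℕ) : (-1 : R[ε]) ^ a = .inl ((-1) ^ a) := by
    rw [← TrivSqZeroExt.inl_pow, TrivSqZeroExt.inl_neg, TrivSqZeroExt.inl_one]
  rw [squidWeight_of_mul_self_eq_zero eps_mul_eps, sign_inl]
  simp only [powerSum_inl, pairs_inl, ← TrivSqZeroExt.inl_sum]
  ext
  · simp
  · simp
    ring

end Linearization

section LegLengths

variable {ι : Type*} [Fintype ι]

/-- The number of legs with at least `k` vertices, for legs with `ls i` vertices. -/
def numGE (ls : ι → ℕ) (k : ℕ) : ℕ := #{i | k ≤ ls i}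

lemma numGE_pos {ls : ι → ℕ} {k : ℕ} : 0 < numGE ls k ↔ ∃ i, k ≤ ls i := by
  simp [numGE, Finset.card_pos, Finset.filter_nonempty_iff]

lemma numGE_antitone (ls : ι → ℕ) : Antitone (numGE ls) :=
  fun _ _ h => Finset.card_le_card (Finset.monotone_filter_right _ fun _ _ => h.trans)

lemma numGE_eq_card_add_numGE_succ (ls : ι → ℕ) (k : ℕ) :
    numGE ls k = #{i | ls i = k} + numGE ls (k + 1) := by
  classical
  rw [numGE, numGE, ← Finset.card_union_of_disjoint]
  · congr 1
    ext i
    simp only [mem_filter_univ, mem_union]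
    omega
  · exact Finset.disjoint_filter.2 fun i _ => by omega

lemma le_sum_of_numGE_pos {ls : ι → ℕ} {a : ℕ} (ha : 0 < numGE ls a) : a ≤ ∑ i, ls i := by
  obtain ⟨i, hi⟩ := numGE_pos.1 ha
  exact hi.trans (Finset.single_le_sum_of_canonicallyOrdered (Finset.mem_univ i))

lemma add_le_sum_of_numGE {ls : ι → ℕ} {a b : ℕ} (ha : 0 < numGE ls a) (hb : 1 < numGE ls b) :
    a + b ≤ ∑ i, ls i := by
  classical
  obtain ⟨i, hi⟩ := numGE_pos.1 ha
  obtain ⟨j, hj, j_ne⟩ := Finset.exists_mem_ne hb i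
  calc a + b ≤ ls i + ls j := Nat.add_le_add hi (Finset.mem_filter_univ j |>.1 hj)
    _ = ∑ k ∈ {i, j}, ls k := (Finset.sum_pair j_ne.symm).symm
    _ ≤ ∑ k, ls k := Finset.sum_le_sum_of_subset (Finset.subset_univ _)

/- At the length `j` of the longest leg of `ls`, the left side of `h` is `2`, and at `j + 1` it is
`1`. Without legs of length at least `j` in `ls'`, the right side would not decrease. -/
lemma numGE_pos_of_add_eq {ι' : Type*} [Fintype ι'] {ls : ι → ℕ} {ls' : ι' → ℕ} {n : ℕ}
    (hn : ∑ i, ls i + 3 ≤ n)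
    (h : ∀ k, 0 < k → k < n → numGE ls k + numGE ls (n - k) = numGE ls' k + numGE ls' (n - k))
    {k : ℕ} (hk : n < 2 * k) (hk_pos : 0 < numGE ls k) : 0 < numGE ls' k := by
  obtain ⟨i, hi⟩ := numGE_pos.1 hk_pos
  set j := ls i
  have numGE_j : 0 < numGE ls j := numGE_pos.2 ⟨i, le_rfl⟩
  have j_le : j ≤ ∑ i, ls i := le_sum_of_numGE_pos numGE_j
  have numGE_succ_j : numGE ls (j + 1) = 0 := by
    have card_pos : 0 < #{i' | ls i' = j} := Finset.card_pos.2 ⟨i, by simp [j]⟩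
    have := numGE_eq_card_add_numGE_succ ls j
    by_contra
    have := add_le_sum_of_numGE numGE_j (show 1 < numGE ls j by omega)
    omega
  have only_one : ¬ 1 < numGE ls (n - (j + 1)) := fun two => by
    have := add_le_sum_of_numGE numGE_j two
    omega
  have sum_at_j := h j (by omega) (by omega)
  have sum_at_succ_j := h (j + 1) (by omega) (by omega)
  have := numGE_antitone ls (show n - j ≤ j by omega)
  have := numGE_antitone ls' (show n - (j + 1) ≤ n - j by omega)
  have := numGE_antitone ls' hi
  omega

theorem numGE_eq_of_add_eq {ι' : Type*} [Fintype ι'] {ls : ι → ℕ} {ls' : ι' → ℕ} {n : ℕ}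
    (hn : ∑ i, ls i + 3 ≤ n) (hn' : ∑ i, ls' i + 3 ≤ n)
    (h : ∀ k, 0 < k → k < n → numGE ls k + numGE ls (n - k) = numGE ls' k + numGE ls' (n - k))
    {k : ℕ} (hk : 0 < k) : numGE ls k = numGE ls' k := by
  have eq_of_lt_two_mul {k : ℕ} (hk : n < 2 * k) : numGE ls k = numGE ls' k := by
    have le_one : ¬ 1 < numGE ls k := fun two => by
      have := add_le_sum_of_numGE (zero_lt_one.trans two) two
      omega
    have le_one' : ¬ 1 < numGE ls' k := fun two => by
      have := add_le_sum_of_numGE (zero_lt_one.trans two) two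
      omega
    have pos_iff := Iff.intro (numGE_pos_of_add_eq hn h hk)
      (numGE_pos_of_add_eq hn' (fun k a b => (h k a b).symm) hk)
    omega
  rcases lt_trichotomy n (2 * k) with large | rfl | small
  · exact eq_of_lt_two_mul large
  · have := h k hk (by omega)
    rw [show 2 * k - k = k by omega] at this
    omega
  · have := h k hk (by omega)
    have := eq_of_lt_two_mul (k := n - k) (by omega)
    omega

lemma exists_perm_of_numGE_eq {ls ls' : ι → ℕ} (h : ∀ k, 0 < k → numGE ls k = numGE ls' k) :
    ∃ τ : Equiv.Perm ι, ∀ i, ls' (τ i) = ls i := by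
  have numGE_eq (k : ℕ) : numGE ls k = numGE ls' k := by
    rcases k.eq_zero_or_pos with rfl | hk
    exacts [by simp [numGE], h k hk]
  have card_fiber (k : ℕ) : Fintype.card {i // ls i = k} = Fintype.card {i // ls' i = k} := by
    rw [Fintype.card_subtype, Fintype.card_subtype]
    have := numGE_eq_card_add_numGE_succ ls k
    have := numGE_eq_card_add_numGE_succ ls' k
    have := numGE_eq k
    have := numGE_eq (k + 1)
    omega
  exact ⟨Equiv.ofFiberEquiv fun k => Fintype.equivOfCardEq (card_fiber k),
    Equiv.ofFiberEquiv_map _⟩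

end LegLengths

section Recovery

open Polynomial DualNumber

variable {ι : Type*} [Fintype ι]

/-- Two colours, of weights `X` and `1`. They make `p_m p_{n-m}` equal to
`X ^ n + X ^ (n - m) + X ^ m + 1`, so that these products can be told apart. -/
noncomputable def twoWeights : Fin 2 → ℤ[X] := ![X, 1]

lemma powerSum_twoWeights (m : ℕ) : powerSum twoWeights m = X ^ m + 1 := by
  simp [powerSum, twoWeights]

lemma coeff_powerSumPairs_twoWeights {n l k : ℕ} (hl : l < n) (hk : 0 < k) (hkn : k < n) :
    (powerSumPairs twoWeights n l).coeff k =
      (if k ≤ l then 1 else 0) + if n - k ≤ l then 1 else 0 := by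
  have coeff_term (m : ℕ) (hm : m ∈ Icc 1 l) :
      (powerSum twoWeights (n - m) * powerSum twoWeights m).coeff k =
        (if k = m then 1 else 0) + if n - k = m then 1 else 0 := by
    have hm := Finset.mem_Icc.1 hm
    rw [powerSum_twoWeights, powerSum_twoWeights, show ((X : ℤ[X]) ^ (n - m) + 1) * (X ^ m + 1) =
      X ^ (n - m + m) + X ^ (n - m) + X ^ m + 1 by ring, Nat.sub_add_cancel (by omega)]
    simp only [coeff_add, coeff_X_pow, coeff_one, hkn.ne, hk.ne', if_false,
      show k = n - m ↔ n - k = m by omega]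
    ring
  rw [powerSumPairs, finsetSum_coeff, Finset.sum_congr rfl coeff_term, Finset.sum_add_distrib]
  simp only [Finset.sum_ite_eq, Finset.mem_Icc]
  congr! 2 <;> omega

lemma coeff_sum_powerSumPairs_twoWeights {n k : ℕ} {ls : ι → ℕ} (hn : ∀ i, ls i < n) (hk : 0 < k)
    (hkn : k < n) :
    (∑ i, powerSumPairs twoWeights n (ls i)).coeff k =
      (numGE ls k + numGE ls (n - k) : ℕ) := by
  simp only [finsetSum_coeff, coeff_powerSumPairs_twoWeights (hn _) hk hkn, Finset.sum_add_distrib]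
  simp [numGE]

lemma eq_and_eq_of_neg_one_pow_mul_eq {l l' n n' a a' : ℕ} (hl : l ≠ 0) (hn : n ≠ 0) (hn' : n' ≠ 0)
    (h : (-1) ^ a * ((l : ℤ[X]) * powerSum twoWeights n) =
      (-1) ^ a' * (l' * powerSum twoWeights n')) : l = l' ∧ n = n' := by
  have eval_eq (t : ℕ) : l * (t ^ n + 1) = l' * (t ^ n' + 1) := by
    have := congrArg (fun p : ℤ[X] => (p.eval (t : ℤ)).natAbs) h
    simp only [powerSum_twoWeights, eval_mul, eval_pow, eval_neg, eval_one, eval_natCast, eval_add,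
      eval_X, Int.natAbs_mul, Int.natAbs_pow, Int.natAbs_neg, Int.natAbs_one, one_pow, one_mul,
      Int.natAbs_natCast] at this
    exact_mod_cast this
  obtain rfl : l = l' := by simpa [hn, hn'] using eval_eq 0
  exact ⟨rfl, by simpa [hl] using eval_eq 2⟩

theorem eq_and_numGE_eq_of_squidWeight_eq {ι' : Type*} [Fintype ι'] {l l' : ℕ}
    {ls : ι → ℕ} {ls' : ι' → ℕ} (hl : 2 ≤ l) (hl' : 2 ≤ l')
    (h : squidWeight ε (algebraMap ℤ[X] ℤ[X][ε] ∘ twoWeights) l ls =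
      squidWeight ε (algebraMap ℤ[X] ℤ[X][ε] ∘ twoWeights) l' ls') :
    l = l' ∧ ∀ k, 0 < k → numGE ls k = numGE ls' k := by
  have fst_eq := congrArg TrivSqZeroExt.fst h
  have snd_eq := congrArg TrivSqZeroExt.snd h
  simp only [squidWeight_eps, TrivSqZeroExt.fst_add, TrivSqZeroExt.fst_inl, TrivSqZeroExt.fst_inr,
    add_zero] at fst_eq
  obtain ⟨rfl, n_eq⟩ := eq_and_eq_of_neg_one_pow_mul_eq (by omega) (by omega) (by omega) fst_eq
  have sum_eq : ∑ i, ls i = ∑ i, ls' i := by omega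
  simp only [squidWeight_eps, TrivSqZeroExt.snd_add, TrivSqZeroExt.snd_inl, TrivSqZeroExt.snd_inr,
    zero_add, ← sum_eq] at snd_eq
  have l_ne : (l : ℤ[X]) ≠ 0 := by exact_mod_cast (show l ≠ 0 by omega)
  have pairs_eq := mul_left_cancel₀ l_ne
    (add_left_cancel (mul_left_cancel₀ (neg_ne_zero.2 (pow_ne_zero _ (by simp))) snd_eq))
  have ls_lt (i : ι) : ls i < l + ∑ i, ls i + 1 := by
    have := Finset.single_le_sum_of_canonicallyOrdered (f := ls) (Finset.mem_univ i)
    omega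
  have ls'_lt (i : ι') : ls' i < l + ∑ i, ls i + 1 := by
    have := Finset.single_le_sum_of_canonicallyOrdered (f := ls') (Finset.mem_univ i)
    omega
  refine ⟨rfl, fun k => numGE_eq_of_add_eq (n := l + ∑ i, ls i + 1) (by omega) (by omega)
    fun k hk hkn => ?_⟩
  have := congrArg (coeff · k) pairs_eq
  simp only [coeff_sum_powerSumPairs_twoWeights ls_lt hk hkn,
    coeff_sum_powerSumPairs_twoWeights ls'_lt hk hkn] at this
  exact_mod_cast this

end Recovery

section InfiniteSquid

/-- The vertex at position `j` of the arm `i` of `infiniteSquid`, position `0` being the root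
`none` for every arm. -/
def armCell (i : ℕ) : ℕ ↪ Option (ℕ × ℕ) where
  toFun
    | 0 => none
    | j + 1 => some (i, j)
  inj' x y := by cases x <;> cases y <;> simp

lemma armCell_zero (i : ℕ) : armCell i 0 = none := rfl

lemma armCell_succ (i j : ℕ) : armCell i (j + 1) = some (i, j) := rfl

lemma armCell_eq_armCell {i i' x y : ℕ} :
    armCell i x = armCell i' y ↔ x = y ∧ (x = 0 ∨ i = i') := by
  cases x <;> cases y <;> simp [armCell_zero, armCell_succ, and_comm]

lemma exists_armCell_eq (a : Option (ℕ × ℕ)) : ∃ i j, armCell i j = a := by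
  rcases a with _ | ⟨i, j⟩
  exacts [⟨0, 0, rfl⟩, ⟨i, j + 1, rfl⟩]

lemma exists_armCell_succ_eq {a : Option (ℕ × ℕ)} (ha : a ≠ none) :
    ∃ i j, armCell i (j + 1) = a := by
  obtain ⟨⟨i, j⟩, rfl⟩ := Option.ne_none_iff_exists'.1 ha
  exact ⟨i, j, rfl⟩

/-- An infinite path starting at `0`, with the additional edge from `0` to `l` if `i = 0`. -/
def armGraph (l i : ℕ) : SimpleGraph ℕ :=
  fromRel fun x y => x + 1 = y ∨ i = 0 ∧ x = 0 ∧ y = l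

lemma armGraph_adj {l i x y : ℕ} : (armGraph l i).Adj x y ↔
    x ≠ y ∧ ((x + 1 = y ∨ i = 0 ∧ x = 0 ∧ y = l) ∨ (y + 1 = x ∨ i = 0 ∧ y = 0 ∧ x = l)) :=
  Iff.rfl

lemma armGraph_adj_succ (l i x : ℕ) : (armGraph l i).Adj x (x + 1) :=
  armGraph_adj.2 ⟨by omega, .inl (.inl rfl)⟩

lemma cycleGraph_adj_iff_armGraph {l : ℕ} {x y : Fin (l + 1)} :
    (cycleGraph (l + 1)).Adj x y ↔ (armGraph l 0).Adj x y := by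
  rcases l with _ | l
  · obtain rfl : x = y := Fin.ext (by omega)
    simp
  · rw [cycleGraph_adj_iff_pathGraph, pathGraph_adj, armGraph_adj]
    simp only [Fin.ext_iff, Fin.val_last, Fin.val_zero, true_and]
    omega

lemma pathGraph_adj_iff_armGraph {l i n : ℕ} (hi : i ≠ 0) {x y : Fin n} :
    (pathGraph n).Adj x y ↔ (armGraph l i).Adj x y := by
  rw [pathGraph_adj, armGraph_adj]
  omega

/-- A graph containing every squid with a cycle of length `l + 1`: the one-point union of infinitely
many infinite arms, where the arm `0` is closed to a cycle at position `l`. -/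
def infiniteSquid (l : ℕ) : SimpleGraph (Option (ℕ × ℕ)) :=
  ⨆ i, (armGraph l i).map (armCell i)

lemma infiniteSquid_adj {l : ℕ} {a b : Option (ℕ × ℕ)} :
    (infiniteSquid l).Adj a b ↔
      ∃ i x y, (armGraph l i).Adj x y ∧ armCell i x = a ∧ armCell i y = b := by
  simp only [infiniteSquid, iSup_adj, map_adj]

lemma infiniteSquid_adj_armCell {l i x y : ℕ} :
    (infiniteSquid l).Adj (armCell i x) (armCell i y) ↔ (armGraph l i).Adj x y := by
  refine infiniteSquid_adj.trans ⟨?_, fun h => ⟨i, x, y, h, rfl, rfl⟩⟩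
  rintro ⟨i', x', y', h, hx, hy⟩
  obtain ⟨rfl, hx⟩ := armCell_eq_armCell.1 hx
  obtain ⟨rfl, hy⟩ := armCell_eq_armCell.1 hy
  obtain rfl : i' = i := by
    have := h.ne
    omega
  exact h

lemma infiniteSquid_adj_succ (l i x : ℕ) :
    (infiniteSquid l).Adj (armCell i x) (armCell i (x + 1)) :=
  infiniteSquid_adj_armCell.2 (armGraph_adj_succ l i x)

lemma infiniteSquid_adj_leg {l i j : ℕ} (hi : i ≠ 0) {a : Option (ℕ × ℕ)} :
    (infiniteSquid l).Adj (armCell i (j + 1)) a ↔ a = armCell i j ∨ a = armCell i (j + 2) := by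
  constructor
  · rintro h
    obtain ⟨i', x, y, hxy, hx, rfl⟩ := infiniteSquid_adj.1 h
    obtain ⟨rfl, rfl⟩ : x = j + 1 ∧ i' = i := by
      have := armCell_eq_armCell.1 hx
      omega
    simp only [EmbeddingLike.apply_eq_iff_eq]
    have := armGraph_adj.1 hxy
    omega
  · rintro (rfl | rfl)
    exacts [(infiniteSquid_adj_succ l i j).symm, infiniteSquid_adj_succ l i (j + 1)]

end InfiniteSquid

section SquidEmbedding

variable {G : SimpleGraph V} {l : ℕ} {v : V}

/-- The image of the embedding `φ` consists of the whole cycle of `infiniteSquid l` and of initial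
segments of its legs, with `v` sent to the root. -/
structure IsSquidEmbedding (φ : G ↪g infiniteSquid l) (v : V) : Prop where
  map_root : φ v = none
  mem_cycle_iff : ∀ j, armCell 0 j ∈ Set.range φ ↔ j ≤ l
  mem_of_succ_mem : ∀ i j, armCell i (j + 1) ∈ Set.range φ → armCell i j ∈ Set.range φ

lemma IsSquidEmbedding.armCell_zero_mem {φ : G ↪g infiniteSquid l} (hφ : IsSquidEmbedding φ v)
    (i : ℕ) : armCell i 0 ∈ Set.range φ := ⟨v, hφ.map_root⟩

lemma IsSquidEmbedding.exists_free_armCell [Finite V] {φ : G ↪g infiniteSquid l}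
    (hφ : IsSquidEmbedding φ v) (hl : 2 ≤ l) {w : V}
    (hw : w ≠ v → (G.neighborSet w).Subsingleton) :
    ∃ i ≠ 0, ∃ j, φ w = armCell i j ∧ armCell i (j + 1) ∉ Set.range φ := by
  by_cases hwv : w = v
  · have first_injective : Function.Injective fun i => armCell (i + 1) 1 := fun i i' h => by
      have := armCell_eq_armCell.1 h
      omega
    obtain ⟨_, ⟨i, rfl⟩, hi⟩ :=
      (Set.infinite_range_of_injective first_injective).exists_notMem_finite (Set.finite_range φ)
    exact ⟨i + 1, i.succ_ne_zero, 0, hwv ▸ hφ.map_root, hi⟩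
  obtain ⟨i, j, hij⟩ := exists_armCell_succ_eq (a := φ w) fun h =>
    hwv (φ.injective (h.trans hφ.map_root.symm))
  have unique_neighbor {k : ℕ} (hk : armCell i k ∈ Set.range φ)
      (h : (armGraph l i).Adj (j + 1) k) : k = j := by
    obtain ⟨p, hp⟩ := hk
    obtain ⟨q, hq⟩ := hφ.mem_of_succ_mem i j ⟨w, hij.symm⟩
    have adj_p : G.Adj w p := by rwa [← φ.map_adj_iff, ← hij, hp, infiniteSquid_adj_armCell]
    have adj_q : G.Adj w q := by
      rw [← φ.map_adj_iff, ← hij, hq]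
      exact (infiniteSquid_adj_succ l i j).symm
    exact (armCell i).injective (by rw [← hp, ← hq, hw hwv adj_p adj_q])
  have next_notMem : armCell i (j + 2) ∉ Set.range φ := fun h => by
    have := unique_neighbor h (armGraph_adj_succ l i _)
    omega
  refine ⟨i, ?_, j + 1, hij.symm, next_notMem⟩
  rintro rfl
  have le_end := (hφ.mem_cycle_iff _).1 ⟨w, hij.symm⟩
  rw [hφ.mem_cycle_iff] at next_notMem
  have := unique_neighbor (k := 0) (hφ.armCell_zero_mem 0) (by rw [armGraph_adj]; omega)
  omega

lemma IsSquidEmbedding.adj_free_armCell {φ : G ↪g infiniteSquid l}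
    (hφ : IsSquidEmbedding φ v) {i j : ℕ} (hi : i ≠ 0) (h : armCell i (j + 1) ∉ Set.range φ)
    (x : V) : (infiniteSquid l).Adj (armCell i (j + 1)) (φ x) ↔ φ x = armCell i j := by
  rw [infiniteSquid_adj_leg hi, or_iff_left]
  exact fun hx => h (hφ.mem_of_succ_mem i (j + 1) ⟨x, hx⟩)

lemma exists_embedding_extension {A : Type*} {K : SimpleGraph A} {u : V}
    (φ : G.induce ({u}ᶜ : Set V) ↪g K) {p : A} (hp : p ∉ Set.range φ)
    (hadj : ∀ x, K.Adj p (φ x) ↔ G.Adj u x) :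
    ∃ ψ : G ↪g K, ψ u = p ∧ ∀ x, ψ x.1 = φ x := by
  classical
  let f (x : V) : A := if h : x = u then p else φ ⟨x, h⟩
  have f_self : f u = p := dif_pos rfl
  have f_coe (x : ({u}ᶜ : Set V)) : f x = φ x := dif_neg x.2
  have ne_p (x : ({u}ᶜ : Set V)) : φ x ≠ p := fun h => hp ⟨x, h⟩
  have cases_eq (x : V) : x = u ∨ ∃ y : ({u}ᶜ : Set V), x = y :=
    or_iff_not_imp_left.2 fun h => ⟨⟨x, h⟩, rfl⟩
  refine ⟨⟨⟨f, fun x y hxy => ?_⟩, fun {x y} => ?_⟩, f_self, f_coe⟩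
  · rcases cases_eq x with rfl | ⟨x, rfl⟩ <;> rcases cases_eq y with rfl | ⟨y, rfl⟩
    · rfl
    · exact absurd (by rw [← f_coe, ← hxy, f_self]) (ne_p y)
    · exact absurd (by rw [← f_coe, hxy, f_self]) (ne_p x)
    · rw [f_coe, f_coe] at hxy
      rw [φ.injective hxy]
  · change K.Adj (f x) (f y) ↔ _
    rcases cases_eq x with rfl | ⟨x, rfl⟩ <;> rcases cases_eq y with rfl | ⟨y, rfl⟩
    · simp
    · rw [f_self, f_coe, hadj]
    · rw [f_self, f_coe, adj_comm, hadj, adj_comm]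
    · rw [f_coe, f_coe, φ.map_adj_iff, induce_adj]

lemma IsSquidEmbedding.exists_extension [Finite V] {u w : V} (huv : v ≠ u)
    {φ : G.induce ({u}ᶜ : Set V) ↪g infiniteSquid l} (hφ : IsSquidEmbedding φ ⟨v, huv⟩)
    (hl : 2 ≤ l) (hwu : w ≠ u) (hu : ∀ x, G.Adj u x ↔ x = w)
    (hw : w ≠ v → (G.neighborSet w \ {u}).Subsingleton) :
    ∃ ψ : G ↪g infiniteSquid l, IsSquidEmbedding ψ v := by
  obtain ⟨i, hi, j, hij, free⟩ := hφ.exists_free_armCell hl (w := ⟨w, hwu⟩) fun hne x hx y hy =>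
    Subtype.ext (hw (fun h => hne (Subtype.ext h)) ⟨hx, x.2⟩ ⟨hy, y.2⟩)
  obtain ⟨ψ, ψ_u, ψ_coe⟩ := exists_embedding_extension φ free fun x => by
    rw [hφ.adj_free_armCell hi free, ← hij, φ.injective.eq_iff, hu, Subtype.ext_iff]
  have mem_range (a) : a ∈ Set.range ψ ↔ a = armCell i (j + 1) ∨ a ∈ Set.range φ := by
    constructor
    · rintro ⟨x, rfl⟩
      by_cases hx : x = u
      · exact .inl (hx ▸ ψ_u)
      · exact .inr ⟨⟨x, hx⟩, (ψ_coe _).symm⟩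
    · rintro (rfl | ⟨x, rfl⟩)
      exacts [⟨u, ψ_u⟩, ⟨x, ψ_coe x⟩]
  refine ⟨ψ, (ψ_coe _).trans hφ.map_root, fun k => ?_, fun i' k hk => ?_⟩
  · rw [mem_range, or_iff_right, hφ.mem_cycle_iff]
    rw [armCell_eq_armCell]
    omega
  · rw [mem_range, armCell_eq_armCell] at hk
    rw [mem_range]
    rcases hk with ⟨hk, hi'⟩ | hk
    · obtain ⟨rfl, rfl⟩ : k = j ∧ i' = i := by omega
      exact .inr ⟨_, hij⟩
    · exact .inr (hφ.mem_of_succ_mem i' k hk)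

end SquidEmbedding

section UnicyclicStructure

variable {G : SimpleGraph V} {v : V}

lemma exists_cycleGraph_iso [Finite V] [G.LocallyFinite] (hG : G.Connected)
    (h2 : G.IsRegularOfDegree 2) (v : V) :
    ∃ n, ∃ e : cycleGraph (n + 3) ≃g G, e 0 = v := by
  have ncard_two (u : V) : (G.neighborSet u).ncard = 2 := by
    rw [← Nat.card_coe_set_eq, Nat.card_eq_fintype_card, card_neighborSet_eq_degree, h2 u]
  have hcyc : G.IsCycles := fun u _ => ncard_two u
  obtain ⟨p, hp, p_verts⟩ :=
    hcyc.exists_cycle_toSubgraph_verts_eq_connectedComponentSupp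
      (ConnectedComponent.connectedComponentMk_mem (v := v))
      (Set.nonempty_of_ncard_ne_zero (by rw [ncard_two]; decide))
  have mem_verts (u : V) : u ∈ p.toSubgraph.verts := by
    rw [p_verts, ConnectedComponent.mem_supp_iff]
    exact ConnectedComponent.sound (hG.preconnected u v)
  obtain ⟨n, hn⟩ := Nat.exists_eq_add_of_le' hp.three_le_length
  let f (i : Fin (n + 3)) : V := p.getVert i
  have f_succ (i : Fin (n + 3)) : f (i + 1) = p.getVert (i + 1) := by
    rcases i.le_last.eq_or_lt with rfl | hi
    · simp [f, ← hn]
    · simp only [f, Fin.val_add_one_of_lt hi]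
  have f_injective : Function.Injective f := fun i j hij =>
    Fin.ext (hp.getVert_injOn' (Set.mem_ofPred.2 (by omega)) (Set.mem_ofPred.2 (by omega)) hij)
  have f_surjective : Function.Surjective f := fun u => by
    obtain ⟨i, rfl, hi⟩ := Walk.mem_support_iff_exists_getVert.1
      (p.mem_verts_toSubgraph.1 (mem_verts u))
    rcases (hn ▸ hi).eq_or_lt with rfl | hi
    · exact ⟨0, by simp [f, ← hn]⟩
    · exact ⟨⟨i, hi⟩, rfl⟩
  refine ⟨n, ⟨.ofBijective f ⟨f_injective, f_surjective⟩, fun {x y} => ?_⟩, p.getVert_zero⟩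
  calc G.Adj (f x) (f y)
    _ ↔ ∃ i : Fin (n + 3), s(f i, f (i + 1)) = s(f x, f y) := by
        rw [← hp.adj_toSubgraph_iff_of_isCycles hcyc (mem_verts _), p.toSubgraph_adj_iff, hn]
        simp only [f_succ]
        exact ⟨fun ⟨i, h, hi⟩ => ⟨⟨i, hi⟩, h⟩, fun ⟨i, h⟩ => ⟨i, h, i.2⟩⟩
    _ ↔ (cycleGraph (n + 3)).Adj x y := by
        simp only [Sym2.eq_iff, f_injective.eq_iff, cycleGraph_adj]
        constructor
        · rintro ⟨i, ⟨rfl, rfl⟩ | ⟨rfl, rfl⟩⟩ <;> simp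
        · rintro (h | h)
          exacts [⟨y, .inr ⟨rfl, by rw [← h]; abel⟩⟩, ⟨x, .inl ⟨rfl, by rw [← h]; abel⟩⟩]

lemma exists_isSquidEmbedding_of_iso_cycleGraph {l : ℕ} (e : cycleGraph (l + 1) ≃g G) :
    ∃ φ : G ↪g infiniteSquid l, IsSquidEmbedding φ (e 0) := by
  let cycleEmb : cycleGraph (l + 1) ↪g infiniteSquid l :=
    ⟨Fin.valEmbedding.trans (armCell 0), by
      simp [infiniteSquid_adj_armCell, cycleGraph_adj_iff_armGraph]⟩
  let φ : G ↪g infiniteSquid l := cycleEmb.comp e.symm.toEmbedding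
  have φ_apply (x : Fin (l + 1)) : φ (e x) = armCell 0 x :=
    congrArg cycleEmb (e.symm_apply_apply x)
  have mem_range (i j : ℕ) : armCell i j ∈ Set.range φ ↔ j ≤ l ∧ (j = 0 ∨ i = 0) := by
    simp only [Set.mem_range, e.surjective.exists, φ_apply, armCell_eq_armCell]
    exact ⟨by omega, fun h => ⟨⟨j, Nat.lt_succ_of_le h.1⟩, rfl, h.2.imp_right Eq.symm⟩⟩
  refine ⟨φ, φ_apply 0, fun j => ?_, fun i j => ?_⟩
  · rw [mem_range]; omega
  · rw [mem_range, mem_range]; omega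

lemma degree_eq_two_of_no_leaf [Fintype V] [DecidableRel G.Adj] (hG : G.Connected)
    (hE : #G.edgeFinset = Fintype.card V) (hdeg : ∀ u ≠ v, G.degree u ≤ 2)
    (no_leaf : ∀ u ≠ v, G.degree u ≠ 1) : G.IsRegularOfDegree 2 := by
  classical
  have : Nontrivial V := by
    by_contra h
    rw [not_nontrivial_iff_subsingleton] at h
    have : G.edgeFinset = ∅ := edgeFinset_eq_empty.2 (Subsingleton.elim _ _)
    have := Fintype.card_pos_iff.2 hG.nonempty
    simp_all
  have degree_ne (u : V) (hu : u ≠ v) : G.degree u = 2 := by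
    have := hG.preconnected.degree_pos_of_nontrivial u
    have := hdeg u hu
    have := no_leaf u hu
    omega
  have degree_sum := G.sum_degrees_eq_twice_card_edges
  rw [hE, ← Finset.add_sum_erase _ _ (mem_univ v),
    Finset.sum_congr rfl fun u hu => degree_ne u (ne_of_mem_erase hu), Finset.sum_const,
    smul_eq_mul, card_erase_of_mem (mem_univ v), card_univ] at degree_sum
  have := Fintype.card_pos_iff.2 hG.nonempty
  intro u
  by_cases hu : u = v
  · rw [hu]; omega
  · exact degree_ne u hu

lemma card_edgeFinset_induce_compl_leaf [Fintype V] [DecidableEq V] [DecidableRel G.Adj]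
    {u : V} (hu : G.degree u = 1) :
    #(G.induce ({u}ᶜ : Set V)).edgeFinset + 1 = #G.edgeFinset := by
  have := G.degree_le_card_edgeFinset u
  rw [card_edgeFinset_induce_compl_singleton, card_edgeFinset_deleteIncidenceSet]
  omega

theorem exists_isSquidEmbedding [Fintype V] [DecidableRel G.Adj] (hG : G.Connected)
    (hE : #G.edgeFinset = Fintype.card V) (hdeg : ∀ u ≠ v, G.degree u ≤ 2) :
    ∃ l ≥ 2, ∃ φ : G ↪g infiniteSquid l, IsSquidEmbedding φ v := by
  classical
  induction h : Fintype.card V generalizing V with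
  | zero => exact absurd h (Fintype.card_pos_iff.2 hG.nonempty).ne'
  | succ n ih =>
    by_cases leaf : ∃ u ≠ v, G.degree u = 1
    · obtain ⟨u, huv, hu⟩ := leaf
      obtain ⟨w, huw, w_unique⟩ := degree_eq_one_iff_existsUnique_adj.1 hu
      have card_compl : Fintype.card ({u}ᶜ : Set V) = n := by
        rw [Fintype.card_compl_set, Set.card_singleton, h, Nat.add_sub_cancel]
      have degree_induce_le (x : ({u}ᶜ : Set V)) (hx : x ≠ ⟨v, huv.symm⟩) :
          (G.induce ({u}ᶜ : Set V)).degree x ≤ 2 :=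
        ((Embedding.induce _).toCopy.degree_le x).trans (hdeg x fun h => hx (Subtype.ext h))
      obtain ⟨l, hl, φ, hφ⟩ := ih (hG.induce_compl_singleton_of_degree_eq_one hu)
        (by have := card_edgeFinset_induce_compl_leaf hu; omega) degree_induce_le card_compl
      refine ⟨l, hl, hφ.exists_extension huv.symm hl huw.ne'
        (fun x => ⟨w_unique x, fun hx => hx ▸ huw⟩) fun hwv => ?_⟩
      have at_most_one_other : #((G.neighborFinset w).erase u) ≤ 1 := by
        have := hdeg w hwv
        rw [card_erase_of_mem ((mem_neighborFinset ..).2 huw.symm), card_neighborFinset_eq_degree]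
        omega
      intro x hx y hy
      exact card_le_one.1 at_most_one_other x (by simpa using hx.symm) y (by simpa using hy.symm)
    · push Not at leaf
      obtain ⟨n, e, he⟩ :=
        exists_cycleGraph_iso hG (degree_eq_two_of_no_leaf hG hE hdeg leaf) v
      exact ⟨n + 2, by omega, he ▸ exists_isSquidEmbedding_of_iso_cycleGraph e⟩

end UnicyclicStructure

section SquidNormalForm

variable {G : SimpleGraph V} {l : ℕ} {v : V}

/-- The vertices of `squidGraph` as vertices of `infiniteSquid`. -/
def squidCell (L : ℕ → ℕ) (N : ℕ) : Option (Σ i : Fin (N + 1), Fin (L i)) ↪ Option (ℕ × ℕ) where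
  toFun := Option.map fun p => (p.1, p.2)
  inj' := Option.map_injective fun ⟨i, x⟩ ⟨j, y⟩ h => by
    obtain ⟨hij, hxy⟩ := Prod.ext_iff.1 h
    obtain rfl : i = j := Fin.ext hij
    exact congrArg _ (Fin.ext hxy)

lemma squidCell_wedgeVertex (L : ℕ → ℕ) {N : ℕ} (i : Fin (N + 1)) (x : Fin (L i + 1)) :
    squidCell L N (wedgeVertex (L := fun i : Fin (N + 1) => L i) i x) = armCell i x := by
  cases x using Fin.cases <;> rfl

lemma armCell_mem_range_squidCell {L : ℕ → ℕ} {N i j : ℕ} :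
    armCell i j ∈ Set.range (squidCell L N) ↔ j = 0 ∨ i ≤ N ∧ j ≤ L i := by
  constructor
  · rintro ⟨_ | ⟨i', j'⟩, h⟩
    · exact .inl ((armCell i).injective (h : armCell i 0 = armCell i j)).symm
    · obtain ⟨rfl, hi⟩ := armCell_eq_armCell.1 (show armCell i' (j' + 1) = armCell i j from h)
      obtain rfl : i' = i := hi.resolve_left j'.val.succ_ne_zero
      exact .inr ⟨Nat.le_of_lt_succ i'.2, j'.2⟩
  · rintro (rfl | ⟨hi, hj⟩)
    · exact ⟨none, rfl⟩
    · exact ⟨_, squidCell_wedgeVertex L ⟨i, by omega⟩ ⟨j, by dsimp only; omega⟩⟩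

lemma squidGraph_adj_iff_infiniteSquid {L : ℕ → ℕ} {N : ℕ}
    {a b : Option (Σ i : Fin (N + 1), Fin (L i))} :
    (squidGraph fun i : Fin (N + 1) => L i).Adj a b ↔
      (infiniteSquid (L 0)).Adj (squidCell L N a) (squidCell L N b) := by
  have arm_adj (i : Fin (N + 1)) (x y : Fin (L i + 1)) :
      (if i = 0 then cycleGraph (L i + 1) else pathGraph (L i + 1)).Adj x y ↔
        (armGraph (L 0) i).Adj x y := by
    split_ifs with hi
    · subst hi
      exact cycleGraph_adj_iff_armGraph
    · exact pathGraph_adj_iff_armGraph (Fin.val_ne_zero_iff.2 hi)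
  rw [squidGraph, wedge_adj, infiniteSquid_adj]
  constructor
  · rintro ⟨i, x, y, hxy, rfl, rfl⟩
    exact ⟨i, x, y, (arm_adj i x y).1 hxy, (squidCell_wedgeVertex L i x).symm,
      (squidCell_wedgeVertex L i y).symm⟩
  · rintro ⟨i, x, y, hxy, hx, hy⟩
    obtain ⟨hi, hxL, hyL⟩ : i < N + 1 ∧ x < L i + 1 ∧ y < L i + 1 := by
      have := hxy.ne
      have := armCell_mem_range_squidCell.1 ⟨a, hx.symm⟩
      have := armCell_mem_range_squidCell.1 ⟨b, hy.symm⟩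
      omega
    refine ⟨⟨i, hi⟩, ⟨x, hxL⟩, ⟨y, hyL⟩, (arm_adj _ _ _).2 hxy, ?_, ?_⟩
    · exact (squidCell L N).injective ((squidCell_wedgeVertex L _ _).trans hx)
    · exact (squidCell L N).injective ((squidCell_wedgeVertex L _ _).trans hy)

/-- `squidGraph` as an induced subgraph of `infiniteSquid`. -/
def squidGraphEmbedding (L : ℕ → ℕ) (N : ℕ) :
    squidGraph (fun i : Fin (N + 1) => L i) ↪g infiniteSquid (L 0) :=
  ⟨squidCell L N, squidGraph_adj_iff_infiniteSquid.symm⟩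

lemma IsSquidEmbedding.exists_armLength [Finite V] {φ : G ↪g infiniteSquid l}
    (hφ : IsSquidEmbedding φ v) : ∃ L : ℕ → ℕ, L 0 = l ∧
      (∀ i j, armCell i j ∈ Set.range φ ↔ j ≤ L i) ∧ ∃ N₀, ∀ i > N₀, L i = 0 := by
  have exists_end (i : ℕ) : ∃ m, ∀ j, armCell i j ∈ Set.range φ ↔ j ≤ m := by
    have downward : Antitone fun j => armCell i j ∈ Set.range φ :=
      antitone_nat_of_succ_le (hφ.mem_of_succ_mem i)
    obtain ⟨m, hm, hmax⟩ := Set.exists_max_image {j | armCell i j ∈ Set.range φ} id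
      ((Set.finite_range φ).preimage (armCell i).injective.injOn) ⟨0, hφ.armCell_zero_mem i⟩
    exact ⟨m, fun j => ⟨hmax j, fun hj => downward hj hm⟩⟩
  choose L hL using exists_end
  refine ⟨L, eq_of_forall_le_iff fun j => (hL 0 j).symm.trans (hφ.mem_cycle_iff j), hL, ?_⟩
  have first_injective : Function.Injective fun i => armCell i 1 := fun i i' h => by
    have := armCell_eq_armCell.1 h
    omega
  obtain ⟨N₀, hN₀⟩ := ((Set.finite_range φ).preimage first_injective.injOn).bddAbove
  refine ⟨N₀, fun i hi => ?_⟩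
  have := mt (@hN₀ i) (not_le.2 hi)
  rw [Set.mem_preimage, hL] at this
  omega

theorem IsSquid.exists_squidGraph_iso [Fintype V] [DecidableRel G.Adj] (hG : IsSquid G) :
    ∃ L : ℕ → ℕ, 2 ≤ L 0 ∧
      ∃ N₀, ∀ N ≥ N₀, Nonempty (G ≃g squidGraph fun i : Fin (N + 1) => L i) := by
  obtain ⟨connected, card_edges, v, -, hv⟩ := hG
  obtain ⟨l, hl, φ, hφ⟩ := exists_isSquidEmbedding connected
    (by rw [← card_edges, Nat.card_eq_fintype_card, edgeFinset_card])
    fun u hu => not_lt.1 (mt (hv u) hu)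
  obtain ⟨L, rfl, hL, N₀, hN₀⟩ := hφ.exists_armLength
  refine ⟨L, hl, N₀, fun N hN => ?_⟩
  have range_eq : Set.range φ = Set.range (squidGraphEmbedding L N) := by
    ext a
    obtain ⟨i, j, rfl⟩ := exists_armCell_eq a
    have := hN₀ i
    exact (hL i j).trans (Iff.trans (by omega) armCell_mem_range_squidCell.symm)
  have e := (squidGraphEmbedding L N).isoInduceRange
  rw [← range_eq] at e
  exact ⟨φ.isoInduceRange.trans e.symm⟩

end SquidNormalForm

lemma squidWeight_natCast_eq_of_sameCSF [Fintype V] [Fintype W] {G : SimpleGraph V}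
    {H : SimpleGraph W} {C R : Type*} [Fintype C] [CommRing R] [IsDomain R] [CharZero R]
    {N N' : ℕ} {L : Fin (N + 1) → ℕ} {L' : Fin (N' + 1) → ℕ}
    (f : G ≃g squidGraph L) (g : H ≃g squidGraph L') (hL : L 0 ≠ 0) (hL' : L' 0 ≠ 0)
    (hX : SameCSF G H) (w : C → R) {k : ℕ} (hk : k ≠ 0) :
    squidWeight (k : R) w (L 0) (Fin.tail L) = squidWeight (k : R) w (L' 0) (Fin.tail L') := by
  let copies : C × Fin k → R := fun p => w p.1
  refine mul_left_cancel₀ (Nat.cast_ne_zero.2 hk : (k : R) ≠ 0) ?_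
  calc k * squidWeight (k : R) w (L 0) (Fin.tail L)
    _ = weightedColorings (squidGraph L) copies := by
        rw [weightedColorings_squidGraph _ L hL, squidWeight_replicate]
    _ = weightedColorings (squidGraph L') copies := by
        rw [← weightedColorings_congr f, hX.weightedColorings_eq, weightedColorings_congr g]
    _ = k * squidWeight (k : R) w (L' 0) (Fin.tail L') := by
        rw [weightedColorings_squidGraph _ L' hL', squidWeight_replicate]

/-- Two squids with equal chromatic symmetric functions are isomorphic. -/
theorem stmt_18 [Fintype V] [Fintype W] (G : SimpleGraph V) (H : SimpleGraph W)
    [DecidableRel G.Adj] [DecidableRel H.Adj]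
    (hG : IsSquid G) (hH : IsSquid H) (hX : SameCSF G H) :
    Nonempty (G ≃g H) := by
  obtain ⟨L, hL, N₁, isoG⟩ := hG.exists_squidGraph_iso
  obtain ⟨L', hL', N₂, isoH⟩ := hH.exists_squidGraph_iso
  obtain ⟨f⟩ := isoG (max N₁ N₂) (le_max_left ..)
  obtain ⟨g⟩ := isoH (max N₁ N₂) (le_max_right ..)
  have L_ne : L 0 ≠ 0 := by omega
  have L'_ne : L' 0 ≠ 0 := by omega
  have weight_eq := squidWeight_eq_of_forall_natCast twoWeights
    (fun _ => squidWeight_natCast_eq_of_sameCSF f g L_ne L'_ne hX twoWeights)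
    (DualNumber.eps : DualNumber (Polynomial ℤ))
  obtain ⟨cycle_eq, legs_eq⟩ := eq_and_numGE_eq_of_squidWeight_eq hL hL' weight_eq
  obtain ⟨e⟩ := nonempty_squidGraph_iso _ _ cycle_eq (exists_perm_of_numGE_eq legs_eq)
  exact ⟨(f.trans e).trans g.symm⟩
end

section
/- Let G and H be crabs, i.e., finite connected simple graphs each containing exactly one cycle and such that every vertex not lying on the cycle is a leaf (has degree 1). Suppose moreover that in each of G and H the degrees of the non-leaf vertices are pairwise distinct and all greater than 2. If G and H have equal chromatic symmetric functions—for every finitely supported function α : ℕ → ℕ, the number of proper colorings κ : V(G) → ℕ with #κ⁻¹({i}) = α(i) for all i equals the corresponding number for H—then G and H are isomorphic as graphs. -/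
open SimpleGraph Finset

variable {V : Type*} {W : Type*}

/-- A crab: a finite connected simple graph containing exactly one cycle (equivalently,
connected with as many edges as vertices) in which every vertex not lying on the cycle
(i.e. through which no cycle passes) is a leaf. -/
def IsCrab [Fintype V] (G : SimpleGraph V) [DecidableRel G.Adj] : Prop :=
  G.Connected ∧ Nat.card G.edgeSet = Fintype.card V ∧
    ∀ v : V, ¬(∃ c : G.Walk v v, c.IsCycle) → G.degree v = 1

/-!
Expanding over spanning subgraphs gives `X_G = ∑ F ≤ G, (-1) ^ |E(F)| p_{type F}`, where the parts
of `type F` are the sizes of the components of `F`; since the power sums `p_l` are linearly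
independent, `X_G` determines the total sign with which each type occurs.

Suppose that `G` arises from vertex-disjoint stars with at least two vertices by joining some of
their centers. A spanning subgraph without isolated vertices contains all the stars. The only one
with the largest number of components is the union `S` of the stars, and those with one component
fewer are the graphs `S + ab` for an edge `ab` between two centers. Subgraphs of one such type have
equally many edges, so their signs do not cancel: `X_G` determines the sizes of the stars and the
pairs of sizes of the stars whose centers are adjacent. If the sizes are pairwise distinct, this
determines `G`. In a crab whose non-leaves have degree greater than 2, every non-leaf is the center
of a star formed by it and its leaves; it has exactly two further neighbors, so distinct degrees
mean distinct sizes.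
-/

section PowerSums

variable {ι κ γ : Type*} [Fintype ι] [Fintype κ]

lemma exists_equiv_of_map_univ_val_eq {f : ι → γ} {g : κ → γ}
    (h : univ.val.map f = univ.val.map g) : ∃ e : ι ≃ κ, ∀ i, g (e i) = f i := by
  classical
  have hcard (c : γ) : Nonempty ({i // f i = c} ≃ {k // g k = c}) := by
    rw [← Fintype.card_eq, Fintype.card_subtype, Fintype.card_subtype]
    simpa [Multiset.count_map, Finset.card, Finset.filter, eq_comm]
      using congrArg (Multiset.count c) h
  exact ⟨Equiv.ofFiberEquiv fun c ↦ (hcard c).some, Equiv.ofFiberEquiv_map _⟩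

/-- The coefficient of the monomial `∏ i, x i ^ α i` in the power sum product `∏ a ∈ l, p a`,
where `p a = ∑ i, x i ^ a`: the number of ways to pick a variable for every part of `l` so that
the parts assigned to `i` add up to `α i`. -/
noncomputable def psumCoeff (l : Multiset ℕ) (α : ℕ →₀ ℕ) : ℕ :=
  Nat.card {g : l → ℕ // ∀ i, ∑ b with g b = i, b.1 = α i}

lemma psumCoeff_map_univ_val (w : ι → ℕ) (α : ℕ →₀ ℕ) :
    psumCoeff (univ.val.map w) α = Nat.card {g : ι → ℕ // ∀ i, ∑ b with g b = i, w b = α i} := by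
  obtain ⟨e, he⟩ := exists_equiv_of_map_univ_val_eq (Multiset.map_univ_coe (univ.val.map w))
  refine Nat.card_congr
    ((e.arrowCongr (Equiv.refl ℕ)).subtypeEquiv fun g ↦ forall_congr' fun i ↦ ?_)
  simp only [sum_filter, ← Equiv.sum_comp e, Equiv.arrowCongr_apply, Equiv.refl_apply,
    Function.comp_apply, Equiv.symm_apply_apply, he]

lemma support_eq_image {w : ι → ℕ} (hw : ∀ b, 0 < w b) {α : ℕ →₀ ℕ} {g : ι → ℕ}
    (hg : ∀ i, ∑ b with g b = i, w b = α i) : α.support = univ.image g := by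
  ext i
  simp [← hg, sum_eq_zero_iff, (hw _).ne']

lemma finite_setOf_sum_fiber_eq {w : ι → ℕ} (hw : ∀ b, 0 < w b) (α : ℕ →₀ ℕ) :
    {g : ι → ℕ | ∀ i, ∑ b with g b = i, w b = α i}.Finite := by
  refine (Set.Finite.pi' fun _ ↦ α.support.finite_toSet).subset fun g hg b ↦ ?_
  rw [mem_coe, support_eq_image hw hg]
  exact mem_image_of_mem g (mem_univ b)

lemma exists_of_psumCoeff_ne_zero {l : Multiset ℕ} {α : ℕ →₀ ℕ} (h : psumCoeff l α ≠ 0) :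
    ∃ g : l → ℕ, ∀ i, ∑ b with g b = i, b.1 = α i := by
  obtain ⟨⟨g, hg⟩⟩ := (Nat.card_ne_zero.1 h).1
  exact ⟨g, hg⟩

lemma pos_of_coe {l : Multiset ℕ} (hl : ∀ a ∈ l, 0 < a) (b : l) : 0 < b.1 :=
  hl b.1 (Multiset.coe_mem)

lemma card_support_le_of_psumCoeff_ne_zero {l : Multiset ℕ} (hl : ∀ a ∈ l, 0 < a) {α : ℕ →₀ ℕ}
    (h : psumCoeff l α ≠ 0) : #α.support ≤ l.card := by
  obtain ⟨g, hg⟩ := exists_of_psumCoeff_ne_zero h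
  rw [support_eq_image (pos_of_coe hl) hg, ← Multiset.card_coe]
  exact card_image_le

lemma map_support_eq_of_psumCoeff_ne_zero {l : Multiset ℕ} (hl : ∀ a ∈ l, 0 < a) {α : ℕ →₀ ℕ}
    (h : psumCoeff l α ≠ 0) (hcard : #α.support = l.card) : α.support.val.map α = l := by
  obtain ⟨g, hg⟩ := exists_of_psumCoeff_ne_zero h
  have himage := support_eq_image (pos_of_coe hl) hg
  have hinj : Function.Injective g := by
    rw [himage, ← Multiset.card_coe, ← card_univ, card_image_iff, coe_univ] at hcard
    exact Set.injOn_univ.1 hcard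
  have hα (b : l) : α (g b) = b.1 := by
    classical
    rw [← hg, sum_filter]
    simp [hinj.eq_iff]
  rw [himage, image_val_of_injOn hinj.injOn, Multiset.map_map]
  simp only [Function.comp_apply, hα, Multiset.map_univ_coe]

lemma exists_psumCoeff_ne_zero {l : Multiset ℕ} (hl : ∀ a ∈ l, 0 < a) :
    ∃ α : ℕ →₀ ℕ, #α.support = l.card ∧ psumCoeff l α ≠ 0 := by
  classical
  obtain ⟨g⟩ : Nonempty (l ↪ ℕ) := ⟨(Fintype.equivFin l).toEmbedding.trans Fin.valEmbedding⟩
  let α : ℕ →₀ ℕ := ∑ b : l, Finsupp.single (g b) b.1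
  have hα (i : ℕ) : ∑ b with g b = i, b.1 = α i := by
    simp [α, Finsupp.finsetSum_apply, Finsupp.single_apply, sum_filter]
  have hfinite := finite_setOf_sum_fiber_eq (pos_of_coe hl) α
  refine ⟨α, ?_, Nat.card_ne_zero.2 ⟨⟨g, hα⟩, hfinite.to_subtype⟩⟩
  rw [support_eq_image (pos_of_coe hl) hα, card_image_of_injective _ g.injective, card_univ,
    Multiset.card_coe]

/- A monomial with as many variables as `l` has parts and occurring in the product for `l` occurs
in no other product with at most that many factors; hence the longest `l` in a vanishing linear
combination has coefficient zero. -/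
lemma linearIndepOn_psumCoeff :
    LinearIndepOn ℤ (fun (l : Multiset ℕ) (α : ℕ →₀ ℕ) ↦ (psumCoeff l α : ℤ))
      {l | ∀ a ∈ l, 0 < a} := by
  refine linearIndepOn_iff.2 fun c hc hzero ↦ ?_
  by_contra hne
  obtain ⟨l, hl, hmax⟩ :=
    c.support.exists_max_image Multiset.card (Finsupp.support_nonempty_iff.2 hne)
  obtain ⟨α, hcard, hα⟩ := exists_psumCoeff_ne_zero (hc hl)
  have hsum : ∑ m ∈ c.support, c m * psumCoeff m α = 0 := by
    simpa [Finsupp.linearCombination_apply, Finsupp.sum] using congrFun hzero α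
  rw [sum_eq_single_of_mem l hl] at hsum
  · exact mul_ne_zero (Finsupp.mem_support_iff.1 hl) (Nat.cast_ne_zero.2 hα) hsum
  · intro m hm hml
    by_contra hterm
    have hmα : psumCoeff m α ≠ 0 := fun h ↦ hterm (by simp [h])
    have hmcard : #α.support = m.card :=
      (card_support_le_of_psumCoeff_ne_zero (hc hm) hmα).antisymm (hcard ▸ hmax m hm)
    exact hml ((map_support_eq_of_psumCoeff_ne_zero (hc hm) hmα hmcard).symm.trans
      (map_support_eq_of_psumCoeff_ne_zero (hc hl) hα hcard))

end PowerSums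

section ComponentType

variable {F F' : SimpleGraph V}

lemma reachable_sup_edge_iff {a b x y : V} :
    (F ⊔ edge a b).Reachable x y ↔ F.Reachable x y ∨
      F.Reachable x a ∧ F.Reachable b y ∨ F.Reachable x b ∧ F.Reachable a y := by
  have hab : (F ⊔ edge a b).Reachable a b := by
    rcases eq_or_ne a b with rfl | hne
    · rfl
    · exact Adj.reachable (Or.inr ((edge_adj a b a b).2 ⟨Or.inl ⟨rfl, rfl⟩, hne⟩))
  have hF {u v : V} (h : F.Reachable u v) : (F ⊔ edge a b).Reachable u v := h.mono le_sup_left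
  refine ⟨fun h ↦ ?_, ?_⟩
  · rw [reachable_eq_reflTransGen] at h
    induction h with
    | refl => exact Or.inl (Reachable.refl x)
    | tail _ hadj ih =>
      rcases hadj with hadj | hadj
      · exact ih.imp (·.trans hadj.reachable) <| Or.imp (.imp_right (·.trans hadj.reachable))
          (.imp_right (·.trans hadj.reachable))
      · obtain ⟨⟨rfl, rfl⟩ | ⟨rfl, rfl⟩, -⟩ := (edge_adj _ _ _ _).1 hadj
        · rcases ih with h | ⟨h, -⟩ | ⟨h, -⟩
          exacts [.inr (.inl ⟨h, .rfl⟩), .inr (.inl ⟨h, .rfl⟩), .inl h]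
        · rcases ih with h | ⟨h, -⟩ | ⟨h, -⟩
          exacts [.inr (.inr ⟨h, .rfl⟩), .inl h, .inr (.inr ⟨h, .rfl⟩)]
  · rintro (h | ⟨hx, hy⟩ | ⟨hx, hy⟩)
    · exact hF h
    · exact ((hF hx).trans hab).trans (hF hy)
    · exact ((hF hx).trans hab.symm).trans (hF hy)

lemma map_eq_of_reachable {β : Type*} {f : V → β} (hf : ∀ u w, F.Adj u w → f u = f w) {x y : V}
    (h : F.Reachable x y) : f x = f y := by
  rw [reachable_eq_reflTransGen] at h
  induction h with
  | refl => rfl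
  | tail _ hadj ih => exact ih.trans (hf _ _ hadj)

variable [Finite V]

/-- The integer partition of the number of vertices whose parts are the sizes of the connected
components of `F`. -/
noncomputable def componentType (F : SimpleGraph V) : Multiset ℕ :=
  let _ := Fintype.ofFinite F.ConnectedComponent
  univ.val.map fun C : F.ConnectedComponent ↦ C.supp.ncard

lemma componentType_eq_map_ncard_preimage {β : Type*} {f : V → β}
    (hf : ∀ x y, F.Reachable x y ↔ f x = f y) {s : Finset β} (hs : ∀ b, b ∈ s ↔ ∃ v, f v = b) :
    componentType F = s.val.map fun b ↦ (f ⁻¹' {b}).ncard := by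
  classical
  let _ := Fintype.ofFinite F.ConnectedComponent
  let φ : F.ConnectedComponent → β := Quot.lift f fun x y ↦ (hf x y).1
  have hφ : Function.Injective φ := by
    rintro ⟨x⟩ ⟨y⟩ hxy
    exact ConnectedComponent.sound ((hf x y).2 hxy)
  have hs' : s = univ.image φ := by
    ext b
    simp only [hs, mem_image, mem_univ, true_and]
    exact (ConnectedComponent.exists (p := (φ · = b))).symm
  rw [hs', image_val_of_injOn hφ.injOn, Multiset.map_map]
  refine Multiset.map_congr rfl fun C _ ↦ ?_
  induction C using ConnectedComponent.ind with | _ v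
  congr 1
  ext x
  exact ConnectedComponent.eq.trans (hf x v)

lemma componentType_eq_map_ncard_supp [Fintype F.ConnectedComponent] :
    componentType F = univ.val.map fun C : F.ConnectedComponent ↦ C.supp.ncard := by
  refine componentType_eq_map_ncard_preimage (fun x y ↦ ConnectedComponent.eq.symm) fun C ↦ ?_
  simp only [mem_univ, true_iff]
  exact C.exists_rep

lemma card_componentType (F : SimpleGraph V) :
    (componentType F).card = Nat.card F.ConnectedComponent := by
  let _ := Fintype.ofFinite F.ConnectedComponent
  rw [componentType_eq_map_ncard_supp, Multiset.card_map, card_val, card_univ,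
    Nat.card_eq_fintype_card]

lemma mem_componentType_iff {a : ℕ} :
    a ∈ componentType F ↔ ∃ v, (F.connectedComponentMk v).supp.ncard = a := by
  simp [componentType, ConnectedComponent.exists]

lemma pos_of_mem_componentType {a : ℕ} (ha : a ∈ componentType F) : 0 < a := by
  obtain ⟨v, rfl⟩ := mem_componentType_iff.1 ha
  exact (Set.ncard_pos).2 (ConnectedComponent.nonempty_supp _)

lemma one_notMem_componentType_iff : 1 ∉ componentType F ↔ ∀ v, v ∈ F.support := by
  rw [mem_componentType_iff, not_exists]
  refine forall_congr' fun v ↦ not_iff_comm.1 ⟨fun hv ↦ ?_, fun h hv ↦ ?_⟩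
  · refine Set.ncard_eq_one.2 ⟨v, Set.eq_singleton_iff_unique_mem.2 ⟨rfl, fun x hx ↦ ?_⟩⟩
    by_contra hne
    exact hv (mem_support_of_reachable (Ne.symm hne) (ConnectedComponent.exact hx).symm)
  · obtain ⟨x, hvx⟩ := hv
    obtain ⟨y, hy⟩ := Set.ncard_eq_one.1 h
    have hx : x ∈ (F.connectedComponentMk v).supp := ConnectedComponent.sound hvx.reachable.symm
    have hv : v ∈ (F.connectedComponentMk v).supp := rfl
    rw [hy] at hx hv
    exact hvx.ne (hv.trans hx.symm)

lemma card_componentType_le_of_le (hle : F ≤ F') :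
    (componentType F').card ≤ (componentType F).card := by
  rw [card_componentType, card_componentType]
  exact Nat.card_le_card_of_surjective _ (ConnectedComponent.surjective_map_ofLE hle)

lemma reachable_iff_of_card_componentType_le (hle : F ≤ F')
    (hcard : (componentType F).card ≤ (componentType F').card) {x y : V} :
    F'.Reachable x y ↔ F.Reachable x y := by
  refine ⟨fun h ↦ ?_, fun h ↦ h.mono hle⟩
  rw [card_componentType, card_componentType] at hcard
  have hinj := ((ConnectedComponent.surjective_map_ofLE hle).bijective_of_nat_card_le hcard).1
  exact ConnectedComponent.exact (hinj (ConnectedComponent.sound h))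

lemma univ_val_eq_cons_cons {ι : Type*} [Fintype ι] [DecidableEq ι] {i j : ι} (hij : i ≠ j) :
    univ.val = i ::ₘ j ::ₘ ((univ.erase j).erase i).val := by
  have hi : i ∈ univ.erase j := mem_erase.2 ⟨hij, mem_univ i⟩
  rw [Multiset.cons_swap, erase_val (univ.erase j), Multiset.cons_erase hi, erase_val,
    Multiset.cons_erase (mem_univ_val j)]

lemma componentType_sup_edge {a b : V} (hab : ¬F.Reachable a b) :
    componentType (F ⊔ edge a b) +
        {(F.connectedComponentMk a).supp.ncard, (F.connectedComponentMk b).supp.ncard} =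
      ((F.connectedComponentMk a).supp.ncard + (F.connectedComponentMk b).supp.ncard) ::ₘ
        componentType F := by
  classical
  let _ := Fintype.ofFinite F.ConnectedComponent
  set A := F.connectedComponentMk a
  set B := F.connectedComponentMk b
  have hAB : A ≠ B := fun h ↦ hab (ConnectedComponent.exact h)
  let merge (C : F.ConnectedComponent) := if C = B then A else C
  have hreach (x y : V) : (F ⊔ edge a b).Reachable x y ↔
      merge (F.connectedComponentMk x) = merge (F.connectedComponentMk y) := by
    rw [reachable_sup_edge_iff]
    simp only [← ConnectedComponent.eq, merge]
    grind
  have hmem (C : F.ConnectedComponent) :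
      C ∈ insert A ((univ.erase B).erase A) ↔ ∃ v, merge (F.connectedComponentMk v) = C := by
    rw [← ConnectedComponent.exists (p := fun D ↦ merge D = C)]
    simp only [merge, mem_insert, mem_erase, mem_univ, and_true]
    refine ⟨fun h ↦ ⟨C, if_neg (by grind)⟩, ?_⟩
    grind
  have hA : ((fun v ↦ merge (F.connectedComponentMk v)) ⁻¹' {A}) = A.supp ∪ B.supp := by
    ext v
    simp only [merge, Set.mem_preimage, Set.mem_singleton_iff, Set.mem_union,
      ConnectedComponent.mem_supp_iff]
    grind
  have hother {C : F.ConnectedComponent} (hC : C ∈ (univ.erase B).erase A) :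
      ((fun v ↦ merge (F.connectedComponentMk v)) ⁻¹' {C}) = C.supp := by
    ext v
    simp only [merge, Set.mem_preimage, Set.mem_singleton_iff, ConnectedComponent.mem_supp_iff]
    grind
  have hrest : ((univ.erase B).erase A).val.map
      (fun C ↦ ((fun v ↦ merge (F.connectedComponentMk v)) ⁻¹' {C}).ncard) =
        ((univ.erase B).erase A).val.map fun C ↦ C.supp.ncard :=
    Multiset.map_congr rfl fun C hC ↦ by rw [hother hC]
  rw [componentType_eq_map_ncard_preimage hreach hmem, componentType_eq_map_ncard_supp,
    univ_val_eq_cons_cons hAB, insert_val_of_notMem (notMem_erase A _), Multiset.map_cons, hrest,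
    hA, Set.ncard_union_eq (pairwise_disjoint_supp_connectedComponent F hAB), Multiset.map_cons,
    Multiset.map_cons, add_comm, Multiset.insert_eq_cons, Multiset.cons_add,
    Multiset.singleton_add, Multiset.cons_swap _ (_ + _), Multiset.cons_swap _ (_ + _)]

lemma card_componentType_sup_edge {a b : V} (hab : ¬F.Reachable a b) :
    (componentType (F ⊔ edge a b)).card + 1 = (componentType F).card := by
  simpa using congrArg Multiset.card (componentType_sup_edge hab)

end ComponentType

section Expansion

lemma ncard_preimage_eq_sum [Finite V] {β : Type*} (f : V → β) (s : Finset β) :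
    (f ⁻¹' s).ncard = ∑ b ∈ s, (f ⁻¹' {b}).ncard := by
  classical
  induction s using Finset.induction_on with
  | empty => simp
  | insert b s hb ih =>
    rw [sum_insert hb, ← ih, coe_insert, Set.insert_eq, Set.preimage_union, Set.ncard_union_eq]
    exact (Set.disjoint_singleton_left.2 (mem_coe.not.2 hb)).preimage f

lemma edgeFinset_fromEdgeSet_of_subset {G : SimpleGraph V} [Fintype G.edgeSet]
    {S : Finset (Sym2 V)} [Fintype (fromEdgeSet (S : Set (Sym2 V))).edgeSet]
    (hS : S ⊆ G.edgeFinset) : (fromEdgeSet (S : Set (Sym2 V))).edgeFinset = S := by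
  have hSG : (S : Set (Sym2 V)) ⊆ G.edgeSet := fun e he ↦ mem_edgeFinset.1 (hS he)
  rw [← coe_inj, coe_edgeFinset, edgeSet_fromEdgeSet, sdiff_eq_left]
  exact Set.subset_compl_iff_disjoint_right.1 (hSG.trans G.edgeSet_subset_compl_diagSet)

variable [Finite V]

lemma finite_setOf_ncard_preimage_eq (α : ℕ →₀ ℕ) :
    {κ : V → ℕ | ∀ i, (κ ⁻¹' {i}).ncard = α i}.Finite := by
  refine (Set.Finite.pi' fun _ ↦ α.support.finite_toSet).subset fun κ hκ v ↦ ?_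
  rw [mem_coe, Finsupp.mem_support_iff, ← hκ]
  exact Set.ncard_ne_zero_of_mem (a := v) rfl

lemma card_monochromaticColorings_eq_psumCoeff (F : SimpleGraph V) (α : ℕ →₀ ℕ) :
    Nat.card {κ : V → ℕ // (∀ u w, F.Adj u w → κ u = κ w) ∧ ∀ i, (κ ⁻¹' {i}).ncard = α i} =
      psumCoeff (componentType F) α := by
  classical
  let _ := Fintype.ofFinite F.ConnectedComponent
  have hncard (g : F.ConnectedComponent → ℕ) (i : ℕ) :
      ((fun v ↦ g (F.connectedComponentMk v)) ⁻¹' {i}).ncard =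
        ∑ C with g C = i, C.supp.ncard := by
    rw [show (fun v ↦ g (F.connectedComponentMk v)) ⁻¹' {i} =
      F.connectedComponentMk ⁻¹' ({C | g C = i} : Finset _) by ext; simp, ncard_preimage_eq_sum]
    rfl
  rw [componentType_eq_map_ncard_supp, psumCoeff_map_univ_val]
  symm
  refine Nat.card_eq_of_bijective (fun g ↦ ⟨fun v ↦ g.1 (F.connectedComponentMk v),
    fun u w huw ↦ congrArg g.1 (ConnectedComponent.sound huw.reachable),
    fun i ↦ (hncard g.1 i).trans (g.2 i)⟩) ⟨fun g g' h ↦ ?_, fun ⟨κ, hκ, hα⟩ ↦ ?_⟩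
  · exact Subtype.ext (funext (ConnectedComponent.ind fun v ↦ congrFun (congrArg Subtype.val h) v))
  · exact ⟨⟨Quot.lift κ fun _ _ ↦ map_eq_of_reachable hκ,
      fun i ↦ (hncard _ i).symm.trans (hα i)⟩, rfl⟩

/-- The expansion of the chromatic symmetric function of `G` in the power sum basis: the coefficient
at `l` is the number of spanning subgraphs of `G` of component type `l`, counted with sign
according to their number of edges. -/
noncomputable def psumExpansion (G : SimpleGraph V) : Multiset ℕ →₀ ℤ :=
  ∑ F ∈ (Set.toFinite (Set.Iic G)).toFinset,
    Finsupp.single (componentType F) ((-1) ^ F.edgeSet.ncard)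

lemma sum_edgeFinset_eq_sum_powerset {M : Type*} [AddCommMonoid M] (G : SimpleGraph V)
    [∀ F : SimpleGraph V, Fintype F.edgeSet] (f : Finset (Sym2 V) → M) :
    ∑ F ∈ (Set.toFinite (Set.Iic G)).toFinset, f F.edgeFinset =
      ∑ S ∈ G.edgeFinset.powerset, f S := by
  classical
  refine sum_nbij' (fun F ↦ F.edgeFinset) (fun S ↦ fromEdgeSet S) ?_ ?_ ?_ ?_ fun _ _ ↦ rfl
  · simp
  · intro S hS
    rw [Set.Finite.mem_toFinset, Set.mem_Iic, ← edgeFinset_subset_edgeFinset,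
      edgeFinset_fromEdgeSet_of_subset (mem_powerset.1 hS)]
    exact mem_powerset.1 hS
  · simp
  · exact fun S hS ↦ edgeFinset_fromEdgeSet_of_subset (mem_powerset.1 hS)

lemma card_properColorings_eq_linearCombination (G : SimpleGraph V) (α : ℕ →₀ ℕ) :
    (Nat.card {κ : V → ℕ // (∀ u w, G.Adj u w → κ u ≠ κ w) ∧
        ∀ i, (κ ⁻¹' {i}).ncard = α i} : ℤ) =
      Finsupp.linearCombination ℤ (fun l α ↦ (psumCoeff l α : ℤ)) (psumExpansion G) α := by
  classical
  let _ (F : SimpleGraph V) : Fintype F.edgeSet := Fintype.ofFinite _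
  let _ : Fintype {κ : V → ℕ // ∀ i, (κ ⁻¹' {i}).ncard = α i} :=
    (finite_setOf_ncard_preimage_eq α).fintype
  let mono (e : Sym2 V) : Finset {κ : V → ℕ // ∀ i, (κ ⁻¹' {i}).ncard = α i} :=
    {κ | (e.map κ.1).IsDiag}
  have hcard (P : (V → ℕ) → Prop) : Nat.card {κ // P κ ∧ ∀ i, (κ ⁻¹' {i}).ncard = α i} =
      #{κ : {κ : V → ℕ // ∀ i, (κ ⁻¹' {i}).ncard = α i} | P κ.1} := by
    rw [← Fintype.card_subtype, ← Nat.card_eq_fintype_card]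
    exact Nat.card_congr ((Equiv.subtypeEquivRight fun _ ↦ and_comm).trans
      (Equiv.subtypeSubtypeEquivSubtypeInter _ P).symm)
  have hproper : #{κ : {κ : V → ℕ // ∀ i, (κ ⁻¹' {i}).ncard = α i} |
      ∀ u w, G.Adj u w → κ.1 u ≠ κ.1 w} = #(G.edgeFinset.inf fun e ↦ (mono e)ᶜ) := by
    congr 1
    ext κ
    simp [mono, mem_inf, Sym2.forall]
  have hmono (F : SimpleGraph V) : psumCoeff (componentType F) α =
      #(F.edgeFinset.inf mono) := by
    rw [← card_monochromaticColorings_eq_psumCoeff, hcard]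
    congr 1
    ext κ
    simp [mono, mem_inf, Sym2.forall]
  rw [hcard, hproper, inclusion_exclusion_card_inf_compl, ← sum_edgeFinset_eq_sum_powerset,
    psumExpansion, map_sum, Finset.sum_apply]
  refine sum_congr rfl fun F _ ↦ ?_
  rw [Finsupp.linearCombination_single, Pi.smul_apply, smul_eq_mul, hmono,
    Set.ncard_eq_toFinset_card', edgeFinset]

lemma support_psumExpansion_subset (G : SimpleGraph V) :
    ((psumExpansion G).support : Set (Multiset ℕ)) ⊆ {l | ∀ a ∈ l, 0 < a} := by
  classical
  intro l hl
  obtain ⟨F, -, hF⟩ := mem_biUnion.1 (Finsupp.support_finsetSum (mem_coe.1 hl))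
  rw [mem_singleton.1 (Finsupp.support_single_subset hF)]
  exact fun a ↦ pos_of_mem_componentType

lemma psumExpansion_apply (G : SimpleGraph V) (l : Multiset ℕ) : psumExpansion G l =
    ∑ F ∈ (Set.toFinite {F | F ≤ G ∧ componentType F = l}).toFinset, (-1) ^ F.edgeSet.ncard := by
  classical
  simp only [psumExpansion, Finsupp.finsetSum_apply, Finsupp.single_apply, ← sum_filter]
  congr 1
  ext F
  simp

lemma exists_componentType_eq_of_psumExpansion_ne_zero {G : SimpleGraph V} {l : Multiset ℕ}
    (h : psumExpansion G l ≠ 0) : ∃ F ≤ G, componentType F = l := by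
  rw [psumExpansion_apply] at h
  obtain ⟨F, hF, -⟩ := exists_ne_zero_of_sum_ne_zero h
  rw [Set.Finite.mem_toFinset] at hF
  exact ⟨F, hF⟩

/- The spanning subgraphs of the given type have the same number of edges, so they are counted with
the same sign and cannot cancel. -/
lemma psumExpansion_componentType_ne_zero {F G : SimpleGraph V} (hF : F ≤ G)
    (hsize : ∀ F' ≤ G, componentType F' = componentType F → F'.edgeSet.ncard = F.edgeSet.ncard) :
    psumExpansion G (componentType F) ≠ 0 := by
  rw [psumExpansion_apply, sum_congr rfl fun F' hF' ↦ congrArg _ <|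
    hsize F' ((Set.Finite.mem_toFinset _).1 hF').1 ((Set.Finite.mem_toFinset _).1 hF').2,
    sum_const, nsmul_eq_mul]
  exact mul_ne_zero (Nat.cast_ne_zero.2 (card_ne_zero_of_mem
    ((Set.Finite.mem_toFinset _).2 ⟨hF, rfl⟩))) (pow_ne_zero _ (by norm_num))

end Expansion

namespace SameCSF

variable [Fintype V] [Fintype W] {G : SimpleGraph V} {H : SimpleGraph W}

lemma symm (h : SameCSF G H) : SameCSF H G := fun α ↦ (h α).symm

lemma psumExpansion_eq (h : SameCSF G H) : psumExpansion G = psumExpansion H := by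
  have hcomb : Finsupp.linearCombination ℤ (fun l α ↦ (psumCoeff l α : ℤ)) (psumExpansion G) =
      Finsupp.linearCombination ℤ (fun l α ↦ (psumCoeff l α : ℤ)) (psumExpansion H) := by
    funext α
    rw [← card_properColorings_eq_linearCombination, ← card_properColorings_eq_linearCombination,
      h α]
  exact linearIndepOn_iffₛ.1 linearIndepOn_psumCoeff _ (support_psumExpansion_subset G) _
    (support_psumExpansion_subset H) hcomb

lemma exists_componentType_eq (h : SameCSF G H) {F : SimpleGraph V} (hF : F ≤ G)
    (hsize : ∀ F' ≤ G, componentType F' = componentType F → F'.edgeSet.ncard = F.edgeSet.ncard) :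
    ∃ F' ≤ H, componentType F' = componentType F := by
  refine exists_componentType_eq_of_psumExpansion_ne_zero ?_
  rw [← h.psumExpansion_eq]
  exact psumExpansion_componentType_ne_zero hF hsize

end SameCSF

section StarRetraction

variable {G : SimpleGraph V} {H : SimpleGraph W} {r : V → V} {s : W → W}

/-- The number of vertices of the fiber of `r` that contains `v`. -/
noncomputable def fiberSize (r : V → V) (v : V) : ℕ := (r ⁻¹' {r v}).ncard

/-- `r` sends every vertex of `G` to the center of its star, in a partition of the vertices into
stars with at least two vertices, whose sizes are pairwise different and whose vertices other than
the center are leaves of `G`. -/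
structure IsStarRetraction (G : SimpleGraph V) (r : V → V) : Prop where
  map_map (v : V) : r (r v) = r v
  adj_iff {v : V} (hv : r v ≠ v) (x : V) : G.Adj v x ↔ x = r v
  one_lt_fiberSize (v : V) : 1 < fiberSize r v
  map_eq_of_fiberSize_eq {u v : V} (h : fiberSize r u = fiberSize r v) : r u = r v

/-- The spanning subgraph of `G` whose edges are those inside a fiber of `r`. -/
def fiberGraph (G : SimpleGraph V) (r : V → V) : SimpleGraph V where
  Adj x y := G.Adj x y ∧ r x = r y
  symm := ⟨fun _ _ h ↦ ⟨h.1.symm, h.2.symm⟩⟩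
  loopless := ⟨fun _ h ↦ h.1.ne rfl⟩

lemma fiberGraph_le : fiberGraph G r ≤ G := fun _ _ h ↦ h.1

lemma ncard_edgeSet_fiberGraph_sup_edge [Finite V] {a b : V} (hab : G.Adj a b) (hne : r a ≠ r b) :
    (fiberGraph G r ⊔ edge a b).edgeSet.ncard = (fiberGraph G r).edgeSet.ncard + 1 := by
  rw [edgeSet_sup, edgeSet_edge_of_ne hab.ne, Set.union_singleton, Set.ncard_insert_of_notMem]
  exact fun h ↦ hne h.2

lemma exists_equiv_apply_eq {α β : Type*} (h : Nonempty (α ≃ β)) (a : α) (b : β) :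
    ∃ e : α ≃ β, e a = b := by
  classical
  obtain ⟨e⟩ := h
  exact ⟨e.trans (Equiv.swap (e a) b), Equiv.swap_apply_left _ _⟩

/- Match the fixed points so that corresponding fibers have the same size, then match each fiber
with its counterpart, fixed point to fixed point. -/
lemma exists_equiv_semiconj [Finite V] [Finite W] [Fintype (Function.fixedPoints r)]
    [Fintype (Function.fixedPoints s)] (hr : ∀ v, r (r v) = r v) (hs : ∀ w, s (s w) = s w)
    (h : (univ.val.map fun u : Function.fixedPoints r ↦ (r ⁻¹' {u.1}).ncard) =
      univ.val.map fun u : Function.fixedPoints s ↦ (s ⁻¹' {u.1}).ncard) :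
    ∃ e : V ≃ W, Function.Semiconj e r s := by
  obtain ⟨e₀, he₀⟩ := exists_equiv_of_map_univ_val_eq h
  let ρ (v : V) : Function.fixedPoints s := e₀ ⟨r v, hr v⟩
  let σ (w : W) : Function.fixedPoints s := ⟨s w, hs w⟩
  have hρ (u : Function.fixedPoints r) : ρ u.1 = e₀ u := congrArg e₀ (Subtype.ext u.2)
  have hσ (u : Function.fixedPoints s) : σ u.1 = u := Subtype.ext u.2
  have hfiber (c : Function.fixedPoints s) : ∃ ε : {v // ρ v = c} ≃ {w // σ w = c},
      ε ⟨(e₀.symm c).1, by simp [hρ]⟩ = ⟨c.1, hσ c⟩ := by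
    refine exists_equiv_apply_eq ((Finite.card_eq ..).1 ?_) _ _
    obtain ⟨u, rfl⟩ := e₀.surjective c
    have hρu : {v | ρ v = e₀ u} = r ⁻¹' {u.1} := by
      ext v
      simp [ρ, Subtype.ext_iff]
    have hσu : {w | σ w = e₀ u} = s ⁻¹' {(e₀ u).1} := by
      ext w
      simp [σ, Subtype.ext_iff]
    exact (congrArg Set.ncard hρu).trans ((he₀ u).symm.trans (congrArg Set.ncard hσu).symm)
  choose ε hε using hfiber
  have happly {c : Function.fixedPoints s} {v : V} (hv : ρ v = c) :
      Equiv.ofFiberEquiv ε v = (ε c ⟨v, hv⟩).1 := by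
    subst hv
    rfl
  refine ⟨Equiv.ofFiberEquiv ε, fun v ↦ ?_⟩
  calc Equiv.ofFiberEquiv ε (r v) = Equiv.ofFiberEquiv ε (e₀.symm (ρ v)).1 := by simp [ρ]
    _ = (ρ v).1 := (happly _).trans (congrArg Subtype.val (hε (ρ v)))
    _ = s (Equiv.ofFiberEquiv ε v) := congrArg Subtype.val (Equiv.ofFiberEquiv_map ε v).symm

lemma fiberSize_of_semiconj {e : V ≃ W} (he : Function.Semiconj e r s) (v : V) :
    fiberSize s (e v) = fiberSize r v := by
  rw [fiberSize, fiberSize, ← he.eq, ← Set.ncard_image_of_injective _ e.injective]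
  congr 1
  ext w
  obtain ⟨u, rfl⟩ := e.surjective w
  simp [← he.eq]

namespace IsStarRetraction

lemma fiberGraph_adj_map (hr : IsStarRetraction G r) {v : V} (hv : r v ≠ v) :
    (fiberGraph G r).Adj v (r v) :=
  ⟨(hr.adj_iff hv _).2 rfl, (hr.map_map v).symm⟩

lemma map_eq_self_of_adj (hr : IsStarRetraction G r) {u v : V} (huv : G.Adj u v)
    (hne : r u ≠ r v) : r u = u := by
  by_contra hu
  rw [(hr.adj_iff hu v).1 huv, hr.map_map] at hne
  exact hne rfl

lemma reachable_fiberGraph_iff (hr : IsStarRetraction G r) {x y : V} :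
    (fiberGraph G r).Reachable x y ↔ r x = r y := by
  have hmap (v : V) : (fiberGraph G r).Reachable v (r v) := by
    by_cases hv : r v = v
    · rw [hv]
    · exact (hr.fiberGraph_adj_map hv).reachable
  exact ⟨map_eq_of_reachable fun _ _ (h : (fiberGraph G r).Adj _ _) ↦ h.2,
    fun h ↦ (hmap x).trans (h ▸ (hmap y).symm)⟩

lemma ncard_supp_fiberGraph (hr : IsStarRetraction G r) (v : V) :
    ((fiberGraph G r).connectedComponentMk v).supp.ncard = fiberSize r v := by
  congr 1
  ext x
  exact ConnectedComponent.eq.trans hr.reachable_fiberGraph_iff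

lemma mem_support_fiberGraph (hr : IsStarRetraction G r) (v : V) :
    v ∈ (fiberGraph G r).support := by
  obtain ⟨x, hx, hxv⟩ := Set.exists_ne_of_one_lt_ncard (hr.one_lt_fiberSize v) v
  exact mem_support_of_reachable hxv.symm (hr.reachable_fiberGraph_iff.2 hx.symm)

variable [Finite V]

lemma one_notMem_componentType_of_le (hr : IsStarRetraction G r) {F : SimpleGraph V}
    (hF : fiberGraph G r ≤ F) : 1 ∉ componentType F :=
  one_notMem_componentType_iff.2 fun v ↦ support_mono hF (hr.mem_support_fiberGraph v)

lemma fiberGraph_le_of_one_notMem (hr : IsStarRetraction G r) {F : SimpleGraph V} (hF : F ≤ G)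
    (h1 : 1 ∉ componentType F) : fiberGraph G r ≤ F := by
  have hleaf {x y : V} (hxy : G.Adj x y) (hx : r x ≠ x) : F.Adj x y := by
    obtain ⟨z, hz⟩ := one_notMem_componentType_iff.1 h1 x
    rwa [(hr.adj_iff hx y).1 hxy, ← (hr.adj_iff hx z).1 (hF hz)]
  rintro x y ⟨hxy, hrxy⟩
  by_cases hx : r x = x
  · have hy : r y ≠ y := fun hy ↦ hxy.ne (hx.symm.trans (hrxy.trans hy))
    exact (hleaf hxy.symm hy).symm
  · exact hleaf hxy hx

lemma eq_fiberGraph (hr : IsStarRetraction G r) {F : SimpleGraph V} (hF : F ≤ G)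
    (h1 : 1 ∉ componentType F)
    (hcard : (componentType (fiberGraph G r)).card ≤ (componentType F).card) :
    F = fiberGraph G r := by
  have hle := hr.fiberGraph_le_of_one_notMem hF h1
  refine le_antisymm (fun x y hxy ↦ ⟨hF hxy, hr.reachable_fiberGraph_iff.1 ?_⟩) hle
  exact (reachable_iff_of_card_componentType_le hle hcard).1 hxy.reachable

lemma eq_fiberGraph_sup_edge (hr : IsStarRetraction G r) {F : SimpleGraph V} (hF : F ≤ G)
    (h1 : 1 ∉ componentType F)
    (hcard : (componentType F).card + 1 = (componentType (fiberGraph G r)).card) :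
    ∃ a b, G.Adj a b ∧ r a ≠ r b ∧ F = fiberGraph G r ⊔ edge a b := by
  have hle := hr.fiberGraph_le_of_one_notMem hF h1
  have hnle : ¬F ≤ fiberGraph G r := fun h ↦ by simp [le_antisymm h hle] at hcard
  obtain ⟨a, b, hab, hnab⟩ : ∃ a b, F.Adj a b ∧ ¬(fiberGraph G r).Adj a b := by
    simpa [le_iff_adj] using hnle
  have hne : r a ≠ r b := fun h ↦ hnab ⟨hF hab, h⟩
  have hsup : fiberGraph G r ⊔ edge a b ≤ F := sup_le hle ((edge_le_iff F).2 (.inr hab))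
  have hcard' := card_componentType_sup_edge (hr.reachable_fiberGraph_iff.not.2 hne)
  refine ⟨a, b, hF hab, hne, le_antisymm (fun x y hxy ↦ ?_) hsup⟩
  have hreach := (reachable_iff_of_card_componentType_le hsup (by lia)).1 hxy.reachable
  simp only [reachable_sup_edge_iff, hr.reachable_fiberGraph_iff] at hreach
  by_cases hxy' : r x = r y
  · exact Or.inl ⟨hF hxy, hxy'⟩
  · have hx := hr.map_eq_self_of_adj (hF hxy) hxy'
    have hy := hr.map_eq_self_of_adj (hF hxy).symm (Ne.symm hxy')
    have ha := hr.map_eq_self_of_adj (hF hab) hne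
    have hb := hr.map_eq_self_of_adj (hF hab).symm hne.symm
    refine Or.inr ((edge_adj a b x y).2 ⟨?_, hxy.ne⟩)
    grind

lemma componentType_fiberGraph_sup_edge (hr : IsStarRetraction G r) {a b : V} (hne : r a ≠ r b) :
    componentType (fiberGraph G r ⊔ edge a b) + {fiberSize r a, fiberSize r b} =
      (fiberSize r a + fiberSize r b) ::ₘ componentType (fiberGraph G r) := by
  rw [← hr.ncard_supp_fiberGraph, ← hr.ncard_supp_fiberGraph]
  exact componentType_sup_edge (hr.reachable_fiberGraph_iff.not.2 hne)

lemma componentType_fiberGraph [Fintype (Function.fixedPoints r)] (hr : IsStarRetraction G r) :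
    componentType (fiberGraph G r) =
      univ.val.map fun u : Function.fixedPoints r ↦ (r ⁻¹' {u.1}).ncard := by
  let ρ (v : V) : Function.fixedPoints r := ⟨r v, hr.map_map v⟩
  have hreach (x y : V) : (fiberGraph G r).Reachable x y ↔ ρ x = ρ y := by
    simp [hr.reachable_fiberGraph_iff, ρ, Subtype.ext_iff]
  rw [componentType_eq_map_ncard_preimage hreach (s := univ) fun u ↦ ?_]
  · simp [ρ, Set.preimage, Subtype.ext_iff]
  · exact ⟨fun _ ↦ ⟨u.1, Subtype.ext u.2⟩, fun _ ↦ mem_univ u⟩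

end IsStarRetraction

lemma pair_eq_pair_of_add_eq {T T' : Multiset ℕ} {x y z t : ℕ} (hx : 0 < x) (hy : 0 < y)
    (hxy : T' + {x, y} = (x + y) ::ₘ T) (hzt : T' + {z, t} = (z + t) ::ₘ T) :
    x = z ∧ y = t ∨ x = t ∧ y = z := by
  have hsum : (z + t) ::ₘ {x, y} = (x + y) ::ₘ ({z, t} : Multiset ℕ) := by
    refine add_left_cancel (a := T') ?_
    rw [Multiset.add_cons, Multiset.add_cons, hxy, hzt, Multiset.cons_swap]
  have hrest {v : ℕ} (h : (x + v) ::ₘ x ::ₘ {y} = (x + y) ::ₘ x ::ₘ ({v} : Multiset ℕ)) :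
      y = v := by
    rw [Multiset.cons_swap, Multiset.cons_swap (x + y), Multiset.cons_inj_right] at h
    have hmem : y ∈ (x + y) ::ₘ ({v} : Multiset ℕ) := h ▸ by simp
    simpa [hx.ne'] using hmem
  have hmem : x ∈ (x + y) ::ₘ ({z, t} : Multiset ℕ) := hsum ▸ by simp
  obtain rfl | rfl : x = z ∨ x = t := by simpa [hy.ne'] using hmem
  · exact Or.inl ⟨rfl, hrest hsum⟩
  · rw [Multiset.pair_comm z, add_comm z] at hsum
    exact Or.inr ⟨rfl, hrest hsum⟩

section TwoGraphs

variable [Fintype V] [Fintype W]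

namespace IsStarRetraction

lemma exists_fiberGraph_le_of_sameCSF (hr : IsStarRetraction G r) (hs : IsStarRetraction H s)
    (hX : SameCSF G H) : ∃ F ≤ H, fiberGraph H s ≤ F ∧
      componentType F = componentType (fiberGraph G r) := by
  obtain ⟨F, hF, htype⟩ := hX.exists_componentType_eq (fiberGraph_le (r := r)) fun F' hF' h ↦ by
    rw [hr.eq_fiberGraph hF' (h ▸ hr.one_notMem_componentType_of_le le_rfl) (h ▸ le_rfl)]
  have h1 := hr.one_notMem_componentType_of_le (F := fiberGraph G r) le_rfl
  exact ⟨F, hF, hs.fiberGraph_le_of_one_notMem hF (htype ▸ h1), htype⟩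

lemma componentType_fiberGraph_eq (hr : IsStarRetraction G r) (hs : IsStarRetraction H s)
    (hX : SameCSF G H) :
    componentType (fiberGraph G r) = componentType (fiberGraph H s) := by
  obtain ⟨F, hF, hle, htype⟩ := hr.exists_fiberGraph_le_of_sameCSF hs hX
  obtain ⟨F', -, hle', htype'⟩ := hs.exists_fiberGraph_le_of_sameCSF hr hX.symm
  have hcard : (componentType (fiberGraph H s)).card ≤ (componentType F).card := by
    rw [htype, ← htype']
    exact card_componentType_le_of_le hle'
  rw [← htype, hs.eq_fiberGraph hF (hs.one_notMem_componentType_of_le hle) hcard]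

lemma exists_adj_of_adj (hr : IsStarRetraction G r) (hs : IsStarRetraction H s)
    (hX : SameCSF G H) {a b : V} (hab : G.Adj a b) (hne : r a ≠ r b) :
    ∃ c d, H.Adj c d ∧ s c ≠ s d ∧ fiberSize s c = fiberSize r a ∧
      fiberSize s d = fiberSize r b := by
  have htypes := hr.componentType_fiberGraph_eq hs hX
  have hle : fiberGraph G r ⊔ edge a b ≤ G := sup_le fiberGraph_le ((edge_le_iff G).2 (.inr hab))
  have h1 := hr.one_notMem_componentType_of_le (F := fiberGraph G r ⊔ edge a b) le_sup_left
  have hcard := card_componentType_sup_edge (hr.reachable_fiberGraph_iff.not.2 hne)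
  obtain ⟨F, hF, htype⟩ := hX.exists_componentType_eq hle fun F' hF' h ↦ by
    obtain ⟨a', b', hab', hne', rfl⟩ :=
      hr.eq_fiberGraph_sup_edge hF' (h ▸ h1) (h ▸ hcard)
    rw [ncard_edgeSet_fiberGraph_sup_edge hab hne, ncard_edgeSet_fiberGraph_sup_edge hab' hne']
  obtain ⟨c, d, hcd, hne', rfl⟩ :=
    hs.eq_fiberGraph_sup_edge hF (htype ▸ h1) (by rw [htype, hcard, htypes])
  have hr' := hr.componentType_fiberGraph_sup_edge hne
  have hs' := hs.componentType_fiberGraph_sup_edge hne'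
  rw [htype, ← htypes] at hs'
  obtain ⟨hc, hd⟩ | ⟨hc, hd⟩ := pair_eq_pair_of_add_eq (zero_lt_one.trans (hs.one_lt_fiberSize c))
    (zero_lt_one.trans (hs.one_lt_fiberSize d)) hs' hr'
  · exact ⟨c, d, hcd, hne', hc, hd⟩
  · exact ⟨d, c, hcd.symm, hne'.symm, hd, hc⟩

lemma map_adj (hr : IsStarRetraction G r) (hs : IsStarRetraction H s) (hX : SameCSF G H)
    {e : V ≃ W} (he : Function.Semiconj e r s) {u v : V} (huv : G.Adj u v) :
    H.Adj (e u) (e v) := by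
  have hleaf {x y : V} (hxy : G.Adj x y) (hx : r x ≠ x) : H.Adj (e x) (e y) := by
    have hex : s (e x) ≠ e x := fun h ↦ hx (e.injective ((he x).trans h))
    rw [hs.adj_iff hex, ← he.eq, (hr.adj_iff hx y).1 hxy]
  by_cases hu : r u = u
  · by_cases hv : r v = v
    · obtain ⟨c, d, hcd, hne, hc, hd⟩ := hr.exists_adj_of_adj hs hX huv
        (by rw [hu, hv]; exact huv.ne)
      have hcu : c = e u := by
        rw [← hs.map_eq_self_of_adj hcd hne, ← hu, he.eq]
        exact hs.map_eq_of_fiberSize_eq (hc.trans (fiberSize_of_semiconj he u).symm)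
      have hdv : d = e v := by
        rw [← hs.map_eq_self_of_adj hcd.symm hne.symm, ← hv, he.eq]
        exact hs.map_eq_of_fiberSize_eq (hd.trans (fiberSize_of_semiconj he v).symm)
      rwa [← hcu, ← hdv]
    · exact (hleaf huv.symm hv).symm
  · exact hleaf huv hu

end IsStarRetraction

theorem stmt_19_general (hr : IsStarRetraction G r) (hs : IsStarRetraction H s)
    (hX : SameCSF G H) : Nonempty (G ≃g H) := by
  classical
  let _ := Fintype.ofFinite (Function.fixedPoints r)
  let _ := Fintype.ofFinite (Function.fixedPoints s)
  obtain ⟨e, he⟩ := exists_equiv_semiconj hr.map_map hs.map_map <| by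
    rw [← hr.componentType_fiberGraph, ← hs.componentType_fiberGraph,
      hr.componentType_fiberGraph_eq hs hX]
  have he' : Function.Semiconj e.symm s r := he.inverse_left e.left_inv e.right_inv
  exact ⟨e, fun {u v} ↦
    ⟨fun h ↦ by simpa using hs.map_adj hr hX.symm he' h, hr.map_adj hs hX he⟩⟩

end TwoGraphs

end StarRetraction

section Crab

variable {G : SimpleGraph V}

/-- The neighbor of `v` if `v` is a leaf of `G`, and `v` itself otherwise. -/
noncomputable def leafCenter (G : SimpleGraph V) [G.LocallyFinite] (v : V) : V :=
  if h : G.degree v = 1 then (degree_eq_one_iff_existsUnique_adj.1 h).choose else v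

lemma adj_iff_eq_leafCenter [G.LocallyFinite] {v x : V} (hv : G.degree v = 1) :
    G.Adj v x ↔ x = leafCenter G v := by
  have hspec := (degree_eq_one_iff_existsUnique_adj.1 hv).choose_spec
  rw [leafCenter, dif_pos hv]
  exact ⟨hspec.2 x, fun h ↦ h ▸ hspec.1⟩

lemma leafCenter_eq_self_iff [G.LocallyFinite] {v : V} : leafCenter G v = v ↔ G.degree v ≠ 1 :=
  ⟨fun h hv ↦ ((adj_iff_eq_leafCenter hv).2 rfl).ne h.symm, fun hv ↦ dif_neg hv⟩

lemma eq_or_eq_of_adj_of_degree_eq_one [G.LocallyFinite] (hG : G.Connected) {u v : V}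
    (huv : G.Adj u v) (hu : G.degree u = 1) (hv : G.degree v = 1) (x : V) : x = u ∨ x = v := by
  have hx := hG.preconnected u x
  rw [reachable_eq_reflTransGen] at hx
  induction hx with
  | refl => exact Or.inl rfl
  | tail _ hadj ih =>
    rcases ih with rfl | rfl
    · exact Or.inr (((adj_iff_eq_leafCenter hu).1 hadj).trans
        ((adj_iff_eq_leafCenter hu).1 huv).symm)
    · exact Or.inl (((adj_iff_eq_leafCenter hv).1 hadj).trans
        ((adj_iff_eq_leafCenter hv).1 huv.symm).symm)

lemma degree_ne_one_of_isCycle [G.LocallyFinite] {v x : V} {c : G.Walk v v} (hc : c.IsCycle)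
    (hx : x ∈ c.support) : G.degree x ≠ 1 := by
  classical
  intro h
  have hcx := hc.rotate hx
  refine hcx.snd_ne_penultimate ?_
  rw [(adj_iff_eq_leafCenter h).1 (Walk.adj_snd hcx.not_nil),
    (adj_iff_eq_leafCenter h).1 (Walk.adj_penultimate hcx.not_nil).symm]

namespace IsCrab

variable [Fintype V] [DecidableRel G.Adj]

lemma sum_degrees (hG : IsCrab G) : ∑ v, G.degree v = 2 * Fintype.card V := by
  classical
  rw [sum_degrees_eq_twice_card_edges, edgeFinset_card, ← Nat.card_eq_fintype_card, hG.2.1]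

lemma degree_ne_one_of_adj (hG : IsCrab G) {u v : V} (huv : G.Adj u v) (hu : G.degree u = 1) :
    G.degree v ≠ 1 := by
  intro hv
  have hone (x : V) : G.degree x = 1 := by
    obtain rfl | rfl := eq_or_eq_of_adj_of_degree_eq_one hG.1 huv hu hv x <;> assumption
  have hsum := hG.sum_degrees
  have hpos := Fintype.card_pos_iff.2 ⟨u⟩
  simp only [hone, sum_const, card_univ, smul_eq_mul, mul_one] at hsum
  lia

lemma degree_leafCenter_ne_one (hG : IsCrab G) (v : V) : G.degree (leafCenter G v) ≠ 1 := by
  by_cases hv : G.degree v = 1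
  · exact hG.degree_ne_one_of_adj ((adj_iff_eq_leafCenter hv).2 rfl) hv
  · rwa [leafCenter_eq_self_iff.2 hv]

lemma two_le_card_neighbors_ne_leaf (hG : IsCrab G) {v : V} (hv : G.degree v ≠ 1) :
    2 ≤ #{x ∈ G.neighborFinset v | G.degree x ≠ 1} := by
  classical
  obtain ⟨c, hc⟩ : ∃ c : G.Walk v v, c.IsCycle := not_not.1 (mt (hG.2.2 v) hv)
  rw [← card_pair hc.snd_ne_penultimate]
  refine card_le_card (insert_subset ?_ (singleton_subset_iff.2 ?_))
  · exact mem_filter.2 ⟨(mem_neighborFinset ..).2 (Walk.adj_snd hc.not_nil),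
      degree_ne_one_of_isCycle hc (c.getVert_mem_support _)⟩
  · exact mem_filter.2 ⟨(mem_neighborFinset ..).2 (Walk.adj_penultimate hc.not_nil).symm,
      degree_ne_one_of_isCycle hc (c.getVert_mem_support _)⟩

lemma sum_card_neighbors_leaf (hG : IsCrab G) :
    ∑ u with G.degree u ≠ 1, #{x ∈ G.neighborFinset u | G.degree x = 1} =
      #{v | G.degree v = 1} := by
  classical
  have hfiber (u : V) :
      #{x ∈ G.neighborFinset u | G.degree x = 1} =
        #{x ∈ ({v | G.degree v = 1} : Finset V) | leafCenter G x = u} := by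
    congr 1
    ext x
    simp only [mem_filter, mem_neighborFinset, mem_univ, true_and, and_comm (a := G.Adj u x)]
    exact and_congr_right fun hx ↦ by rw [G.adj_comm, adj_iff_eq_leafCenter hx, eq_comm]
  simp only [hfiber]
  refine (card_eq_sum_card_fiberwise (f := leafCenter G) fun v _ ↦ ?_).symm
  exact mem_coe.2 (mem_filter.2 ⟨mem_univ _, hG.degree_leafCenter_ne_one v⟩)

/- Every non-leaf has at least two neighbors that are not leaves, and on average exactly two. -/
lemma card_neighbors_ne_leaf (hG : IsCrab G) {v : V} (hv : G.degree v ≠ 1) :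
    #{x ∈ G.neighborFinset v | G.degree x ≠ 1} = 2 := by
  have hsplit (u : V) : #{x ∈ G.neighborFinset u | G.degree x = 1} +
      #{x ∈ G.neighborFinset u | G.degree x ≠ 1} = G.degree u :=
    card_filter_add_card_filter_not _
  have hleaves : ∑ u with G.degree u = 1, G.degree u = #{u | G.degree u = 1} := by
    rw [card_eq_sum_ones]
    exact sum_congr rfl fun u hu ↦ (mem_filter.1 hu).2
  have hcard : #{u | G.degree u = 1} + #{u | G.degree u ≠ 1} = Fintype.card V :=
    card_filter_add_card_filter_not _
  have hdegrees : ∑ u with G.degree u = 1, G.degree u + ∑ u with G.degree u ≠ 1, G.degree u =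
      2 * Fintype.card V :=
    (sum_filter_add_sum_filter_not ..).trans hG.sum_degrees
  have hnonleaves : ∑ u with G.degree u ≠ 1, G.degree u = #{u | G.degree u = 1} +
      ∑ u with G.degree u ≠ 1, #{x ∈ G.neighborFinset u | G.degree x ≠ 1} := by
    rw [← hG.sum_card_neighbors_leaf, ← sum_add_distrib]
    exact sum_congr rfl fun u _ ↦ (hsplit u).symm
  have htotal : ∑ u with G.degree u ≠ 1, 2 =
      ∑ u with G.degree u ≠ 1, #{x ∈ G.neighborFinset u | G.degree x ≠ 1} := by
    rw [sum_const, smul_eq_mul]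
    lia
  have htwo := (sum_eq_sum_iff_of_le fun u hu ↦
    hG.two_le_card_neighbors_ne_leaf (mem_filter.1 hu).2).1 htotal
  exact (htwo v (mem_filter.2 ⟨mem_univ v, hv⟩)).symm

lemma leafCenter_leafCenter (hG : IsCrab G) (v : V) :
    leafCenter G (leafCenter G v) = leafCenter G v :=
  leafCenter_eq_self_iff.2 (hG.degree_leafCenter_ne_one v)

lemma fiberSize_leafCenter_add_one (hG : IsCrab G) (v : V) :
    fiberSize (leafCenter G) v + 1 = G.degree (leafCenter G v) := by
  classical
  set u := leafCenter G v
  have hu : G.degree u ≠ 1 := hG.degree_leafCenter_ne_one v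
  have hfiber : leafCenter G ⁻¹' {u} =
      (insert u ({x ∈ G.neighborFinset u | G.degree x = 1} : Finset V) : Finset V) := by
    ext x
    by_cases hx : G.degree x = 1
    · have hxu : x ≠ u := fun h ↦ hu (h ▸ hx)
      simp [hx, hxu, G.adj_comm u x, adj_iff_eq_leafCenter hx, eq_comm]
    · simp [hx, leafCenter_eq_self_iff.2 hx]
  rw [fiberSize, hfiber, Set.ncard_coe_finset, card_insert_of_notMem (by simp [hu]),
    ← card_neighborFinset_eq_degree,
    ← card_filter_add_card_filter_not (s := G.neighborFinset u) (fun x ↦ G.degree x = 1),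
    hG.card_neighbors_ne_leaf hu]

lemma isStarRetraction_leafCenter (hG : IsCrab G) (hbig : ∀ v, G.degree v ≠ 1 → 2 < G.degree v)
    (hdist : ∀ v w, G.degree v ≠ 1 → G.degree w ≠ 1 → G.degree v = G.degree w → v = w) :
    IsStarRetraction G (leafCenter G) where
  map_map := hG.leafCenter_leafCenter
  adj_iff hv _ := adj_iff_eq_leafCenter (not_not.1 (mt leafCenter_eq_self_iff.2 hv))
  one_lt_fiberSize v := by
    have hsize := hG.fiberSize_leafCenter_add_one v
    have hdeg := hbig _ (hG.degree_leafCenter_ne_one v)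
    lia
  map_eq_of_fiberSize_eq {u v} h := by
    refine hdist _ _ (hG.degree_leafCenter_ne_one u) (hG.degree_leafCenter_ne_one v) ?_
    rw [← hG.fiberSize_leafCenter_add_one, ← hG.fiberSize_leafCenter_add_one, h]

end IsCrab

end Crab

/-- Let `G` and `H` be crabs in which the degrees of the non-leaf vertices are pairwise
distinct and all greater than 2.  If `G` and `H` have equal chromatic symmetric functions,
then they are isomorphic. -/
theorem stmt_19 [Fintype V] [Fintype W] (G : SimpleGraph V) (H : SimpleGraph W)
    [DecidableRel G.Adj] [DecidableRel H.Adj]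
    (hG : IsCrab G) (hH : IsCrab H)
    (hGbig : ∀ v : V, G.degree v ≠ 1 → 2 < G.degree v)
    (hGdist : ∀ v w : V, G.degree v ≠ 1 → G.degree w ≠ 1 →
      G.degree v = G.degree w → v = w)
    (hHbig : ∀ v : W, H.degree v ≠ 1 → 2 < H.degree v)
    (hHdist : ∀ v w : W, H.degree v ≠ 1 → H.degree w ≠ 1 →
      H.degree v = H.degree w → v = w)
    (hX : SameCSF G H) :
    Nonempty (G ≃g H) :=
  stmt_19_general (hG.isStarRetraction_leafCenter hGbig hGdist)
    (hH.isStarRetraction_leafCenter hHbig hHdist) hX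
end
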